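/- Let Ω ⊂ R^n be open and f ∈ W^{2,p}_loc(Ω) with 1 ≤ p < ∞. Then there exists an increasing sequence of closed sets C_k ⊂ C_{k+1} ⊂ Ω such that for each k the precise representative f* restricted to C_k is Lipschitz continuous outside a subset of C_k of p-capacity zero, and cap_p(Ω \ ∪_k C_k) = 0. -/

import Mathlib

open MeasureTheory Metric Filter Set
open scoped ENNReal Topology NNReal

noncomputable section

/-- Euclidean space ℝⁿ. -/
abbrev En (n : ℕ) := EuclideanSpace ℝ (Fin n)

variable {n : ℕ}

/-- The average of `f` over the ball `B(x,r)`. -/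
def ballAvg (f : En n → ℝ) (x : En n) (r : ℝ) : ℝ :=
  ⨍ y in Metric.ball x r, f y

open scoped Classical in
/-- The precise representative of `f`: the limit of ball averages where it exists, `0` otherwise. -/
def preciseRep (f : En n → ℝ) (x : En n) : ℝ :=
  if h : ∃ L : ℝ, Tendsto (fun r => ballAvg f x r) (nhdsWithin 0 (Set.Ioi 0)) (nhds L)
  then h.choose else 0

/-- A test function: smooth, compactly supported, with support inside `Ω`. -/
def IsTest (Ω : Set (En n)) (η : En n → ℝ) : Prop :=
  ContDiff ℝ (⊤ : ℕ∞) η ∧ HasCompactSupport η ∧ tsupport η ⊆ Ω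

/-- `g` is the weak partial derivative of `f` in direction `v`, on `Ω`. -/
def HasWeakPartialOn (Ω : Set (En n)) (f g : En n → ℝ) (v : En n) : Prop :=
  ∀ η : En n → ℝ, IsTest Ω η →
    ∫ x, f x * fderiv ℝ η x v = - ∫ x, g x * η x

/-- `g` is the weak gradient of `f` on `Ω`. -/
def HasWeakGradientOn (Ω : Set (En n)) (f : En n → ℝ) (g : En n → En n) : Prop :=
  ∀ i : Fin n, HasWeakPartialOn Ω f (fun x => g x i) (EuclideanSpace.single i 1)

/-- `f ∈ W^{1,p}(ℝⁿ)` with weak gradient `g`. -/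
def MemW1p (p : ℝ) (f : En n → ℝ) (g : En n → En n) : Prop :=
  AEStronglyMeasurable f volume ∧ AEStronglyMeasurable g volume ∧
  HasWeakGradientOn Set.univ f g ∧
  Integrable (fun x => |f x| ^ p) ∧ Integrable (fun x => ‖g x‖ ^ p)

/-- `f ∈ W^{1,p}_loc(Ω)` with weak gradient `g`. -/
def MemW1pLoc (p : ℝ) (Ω : Set (En n)) (f : En n → ℝ) (g : En n → En n) : Prop :=
  AEStronglyMeasurable f volume ∧ AEStronglyMeasurable g volume ∧
  HasWeakGradientOn Ω f g ∧
  ∀ K : Set (En n), K ⊆ Ω → IsCompact K →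
    IntegrableOn (fun x => |f x| ^ p) K ∧ IntegrableOn (fun x => ‖g x‖ ^ p) K

/-- `f ∈ W^{2,p}_loc(Ω)` with weak gradient `g` and weak second derivatives `h`. -/
def MemW2pLoc (p : ℝ) (Ω : Set (En n)) (f : En n → ℝ)
    (g : En n → En n) (h : En n → Fin n → En n) : Prop :=
  AEStronglyMeasurable f volume ∧ AEStronglyMeasurable g volume ∧
  HasWeakGradientOn Ω f g ∧
  (∀ i : Fin n, HasWeakGradientOn Ω (fun x => g x i) (fun x => h x i)) ∧
  ∀ K : Set (En n), K ⊆ Ω → IsCompact K →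
    IntegrableOn (fun x => |f x| ^ p) K ∧ IntegrableOn (fun x => ‖g x‖ ^ p) K ∧
    ∀ i : Fin n, IntegrableOn (fun x => ‖h x i‖ ^ p) K

/-- `f ∈ W^{2,p}(ℝⁿ)` with weak gradient `g` and weak second derivatives `h`. -/
def MemW2p (p : ℝ) (f : En n → ℝ) (g : En n → En n) (h : En n → Fin n → En n) : Prop :=
  AEStronglyMeasurable f volume ∧ AEStronglyMeasurable g volume ∧
  HasWeakGradientOn Set.univ f g ∧
  (∀ i : Fin n, HasWeakGradientOn Set.univ (fun x => g x i) (fun x => h x i)) ∧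
  Integrable (fun x => |f x| ^ p) ∧ Integrable (fun x => ‖g x‖ ^ p) ∧
  ∀ i : Fin n, Integrable (fun x => ‖h x i‖ ^ p)

/-- The `p`-capacity of a compact set. -/
def capK (p : ℝ) (F : Set (En n)) : ℝ≥0∞ :=
  ⨅ (g : En n → ℝ) (_ : ContDiff ℝ (⊤ : ℕ∞) g ∧ HasCompactSupport g ∧ ∀ x ∈ F, 1 ≤ g x),
    ∫⁻ x, (‖fderiv ℝ g x‖₊ : ℝ≥0∞) ^ p

/-- The `p`-capacity of an open set, by inner regularity over compact subsets. -/
def capOpen (p : ℝ) (U : Set (En n)) : ℝ≥0∞ :=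
  ⨆ (F : Set (En n)) (_ : F ⊆ U ∧ IsCompact F), capK p F

/-- The `p`-capacity of an arbitrary set, by outer regularity over open supersets. -/
def cap (p : ℝ) (E : Set (En n)) : ℝ≥0∞ :=
  ⨅ (U : Set (En n)) (_ : E ⊆ U ∧ IsOpen U), capOpen p U

/-- `f` restricted to `s` is Lipschitz outside a subset of `s` of `p`-capacity zero. -/
def LipschitzOnQE (p : ℝ) (f : En n → ℝ) (s : Set (En n)) : Prop :=
  ∃ N : Set (En n), N ⊆ s ∧ cap p N = 0 ∧ ∃ K : ℝ≥0, LipschitzOnWith K f (s \ N)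

/-- The multiplicity function: the number of preimages of `y` in `A` under `φ`. -/
def Nphi (φ : En n → En n) (A : Set (En n)) (y : En n) : ℝ≥0∞ :=
  Measure.count {x ∈ A | φ x = y}

end



theorem jensenP {α : Type*} [MeasurableSpace α] (μ : Measure α) [IsProbabilityMeasure μ]
    (F : α → ℝ≥0∞) (hF : AEMeasurable F μ) {p : ℝ} (hp : 1 ≤ p) :
    (∫⁻ x, F x ∂μ) ^ p ≤ ∫⁻ x, F x ^ p ∂μ := by
  have h := eLpNorm'_le_eLpNorm'_of_exponent_le (f := F) (p := 1) (q := p) one_pos hp μ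
    hF.aestronglyMeasurable
  simp only [eLpNorm', enorm_eq_self, ENNReal.rpow_one, div_one, one_div] at h
  calc _ ≤ ((∫⁻ x, F x ^ p ∂μ) ^ p⁻¹) ^ p := ENNReal.rpow_le_rpow h (by linarith)
    _ = _ := by rw [← ENNReal.rpow_mul, inv_mul_cancel₀ (by linarith), ENNReal.rpow_one]

theorem jensenSet {α : Type*} [MeasurableSpace α] (μ : Measure α) (Q : Set α)
    (h0 : μ Q ≠ 0) (hT : μ Q ≠ ∞)
    (F : α → ℝ≥0∞) (hF : AEMeasurable F (μ.restrict Q)) {p : ℝ} (hp : 1 ≤ p) :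
    ((μ Q)⁻¹ * ∫⁻ x in Q, F x ∂μ) ^ p ≤ (μ Q)⁻¹ * ∫⁻ x in Q, F x ^ p ∂μ := by
  have : IsProbabilityMeasure ((μ Q)⁻¹ • μ.restrict Q) :=
    ⟨by simp [ENNReal.inv_mul_cancel h0 hT]⟩
  have := jensenP ((μ Q)⁻¹ • μ.restrict Q) F (hF.smul_measure _) hp
  simpa [lintegral_smul_measure] using this

section
set_option linter.unusedSectionVars false
variable {E : Type*} [NormedAddCommGroup E] [NormedSpace ℝ E] [FiniteDimensional ℝ E]
  [MeasurableSpace E] [BorelSpace E] (μ : Measure E) [μ.IsAddHaarMeasure]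

theorem lintegral_affine (F : E → ℝ≥0∞) {s : ℝ} (hs : s ≠ 0) (b : E) :
    ∫⁻ x, F (s • x + b) ∂μ = ENNReal.ofReal (|(s ^ Module.finrank ℝ E)⁻¹|) * ∫⁻ x, F x ∂μ := by
  have h1 : ∫⁻ x, F (x + b) ∂μ = ∫⁻ x, F x ∂μ := lintegral_add_right_eq_self F b
  rw [← h1]
  have h2 := (Homeomorph.smulOfNeZero s hs).measurableEmbedding.lintegral_map (μ := μ)
    (fun x => F (x + b))
  have h3 : Measure.map (⇑(Homeomorph.smulOfNeZero (α := E) s hs)) μ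
    = ENNReal.ofReal (abs (s ^ Module.finrank ℝ E)⁻¹) • μ := Measure.map_addHaar_smul μ hs
  rw [h3, lintegral_smul_measure] at h2
  simp only [smul_eq_mul, Homeomorph.smulOfNeZero_apply] at h2
  exact h2.symm

theorem ftc_le (v : E → ℝ) (hv : ContDiff ℝ 1 v) (x y : E) :
    ‖v y - v x‖ₑ ≤ (∫⁻ t in Icc (0:ℝ) 1, ‖fderiv ℝ v ((1 - t) • x + t • y)‖ₑ) * ‖y - x‖ₑ := by
  have hd : ∀ t : ℝ, HasDerivAt (fun t : ℝ => v ((1 - t) • x + t • y))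
      (fderiv ℝ v ((1 - t) • x + t • y) (y - x)) t := by
    intro t
    have h1 := (hv.differentiable one_ne_zero ((1 - t) • x + t • y)).hasFDerivAt
    have h2 : HasDerivAt (fun t : ℝ => (1 - t) • x + t • y) (y - x) t := by
      have := (((hasDerivAt_id t).const_sub 1).smul_const x).add ((hasDerivAt_id t).smul_const y)
      exact HasDerivAt.congr_deriv (f := fun t : ℝ => (1 - t) • x + t • y) this (by module)
    exact h1.comp_hasDerivAt t h2
  have hc : Continuous fun t : ℝ => fderiv ℝ v ((1 - t) • x + t • y) :=
    (hv.continuous_fderiv one_ne_zero).comp (by fun_prop)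
  have h := intervalIntegral.integral_eq_sub_of_hasDerivAt (a := 0) (b := 1) (fun t _ => hd t)
    ((hc.clm_apply continuous_const).intervalIntegrable _ _)
  simp only [sub_self, zero_smul, one_smul, zero_add, sub_zero, add_zero] at h
  rw [← h, intervalIntegral.integral_of_le zero_le_one, ← integral_Icc_eq_integral_Ioc,
    ← lintegral_mul_const'' _ hc.enorm.aemeasurable]
  refine (enorm_integral_le_lintegral_enorm _).trans (lintegral_mono fun t => ?_)
  exact ContinuousLinearMap.le_opENorm _ _


theorem contract_le (c : E) (r : ℝ) (k : E → ℝ≥0∞) {s : ℝ} (hs : 1 / 2 ≤ s) (hs1 : s ≤ 1)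
    (y : E) (hy : y ∈ closedBall c r) :
    ∫⁻ x in closedBall c r, k (s • x + (1 - s) • y) ∂μ
      ≤ 2 ^ Module.finrank ℝ E * ∫⁻ x in closedBall c r, k x ∂μ := by
  have hs0 : 0 < s := by linarith
  rw [← lintegral_indicator measurableSet_closedBall, ← lintegral_indicator measurableSet_closedBall]
  calc _ ≤ ∫⁻ x, (closedBall c r).indicator k (s • x + (1 - s) • y) ∂μ := by
        refine lintegral_mono fun x => ?_
        by_cases hx : x ∈ closedBall c r
        · have : s • x + (1 - s) • y ∈ closedBall c r :=
            (convex_closedBall c r) hx hy (by linarith) (by linarith) (by ring)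
          simp only [indicator_of_mem hx, indicator_of_mem this, le_refl]
        · simp [indicator_of_notMem hx]
    _ = ENNReal.ofReal (|(s ^ Module.finrank ℝ E)⁻¹|) * _ :=
        lintegral_affine μ _ hs0.ne' _
    _ ≤ _ := by
        gcongr
        rw [abs_of_pos (by positivity)]
        calc ENNReal.ofReal ((s ^ Module.finrank ℝ E)⁻¹)
            ≤ ENNReal.ofReal (2 ^ Module.finrank ℝ E) := by
              apply ENNReal.ofReal_le_ofReal
              rw [← inv_pow]
              gcongr
              rw [inv_le_comm₀ hs0 (by norm_num)]; linarith
          _ = _ := by rw [ENNReal.ofReal_pow (by norm_num)]; simp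

theorem double_le (c : E) (r : ℝ) (k : E → ℝ≥0∞) (hk : Measurable k) {t : ℝ} (ht : 0 ≤ t)
    (ht1 : t ≤ 1) :
    ∫⁻ x in closedBall c r, ∫⁻ y in closedBall c r, k ((1 - t) • x + t • y) ∂μ ∂μ
      ≤ 2 ^ Module.finrank ℝ E * (∫⁻ x in closedBall c r, k x ∂μ) * μ (closedBall c r) := by
  rcases le_total t (1 / 2) with h | h
  · rw [lintegral_lintegral_swap (by fun_prop)]
    rw [← setLIntegral_const]
    refine setLIntegral_mono' measurableSet_closedBall fun y hy => ?_
    simpa using contract_le μ c r k (s := 1 - t) (by linarith) (by linarith) y hy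
  · rw [← setLIntegral_const]
    refine setLIntegral_mono' measurableSet_closedBall fun y hy => ?_
    simp_rw [add_comm ((1 - t) • y)]
    exact contract_le μ c r k (s := t) (by linarith) (by linarith) y hy

theorem triple_swap (Q : Set E) (k : E → ℝ≥0∞) (hk : Continuous k) :
    ∫⁻ x in Q, ∫⁻ y in Q, ∫⁻ t in Icc (0:ℝ) 1, k ((1 - t) • x + t • y) ∂volume ∂μ ∂μ
      = ∫⁻ t in Icc (0:ℝ) 1, ∫⁻ x in Q, ∫⁻ y in Q, k ((1 - t) • x + t • y) ∂μ ∂μ := by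
  have e1 : ∀ x, ∫⁻ y in Q, ∫⁻ t in Icc (0:ℝ) 1, k ((1 - t) • x + t • y) ∂volume ∂μ
      = ∫⁻ t in Icc (0:ℝ) 1, ∫⁻ y in Q, k ((1 - t) • x + t • y) ∂μ := by
    intro x
    refine lintegral_lintegral_swap (Continuous.measurable ?_).aemeasurable
    exact hk.comp (by fun_prop : Continuous fun z : E × ℝ => (1 - z.2) • x + z.2 • z.1)
  simp_rw [e1]
  refine lintegral_lintegral_swap ?_
  have : Measurable fun z : (E × ℝ) × E => k ((1 - z.1.2) • z.1.1 + z.1.2 • z.2) :=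
    (hk.comp (by fun_prop : Continuous fun z : (E × ℝ) × E =>
      (1 - z.1.2) • z.1.1 + z.1.2 • z.2)).measurable
  exact (Measurable.lintegral_prod_right' this).aemeasurable

theorem poincare (c : E) {r : ℝ} (hr : 0 < r) (v : E → ℝ) (hv : ContDiff ℝ 1 v) {p : ℝ}
    (hp : 1 ≤ p) :
    ∫⁻ x in closedBall c r, ‖(⨍ y in closedBall c r, v y ∂μ) - v x‖ₑ ^ p ∂μ
      ≤ 2 ^ Module.finrank ℝ E * ENNReal.ofReal (2 * r) ^ p *
        ∫⁻ x in closedBall c r, ‖fderiv ℝ v x‖ₑ ^ p ∂μ := by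
  set Q := closedBall c r with hQ
  have h0 : μ Q ≠ 0 := (measure_closedBall_pos μ c hr).ne'
  have hT : μ Q ≠ ∞ := measure_closedBall_lt_top.ne
  have hp0 : 0 ≤ p := by linarith
  have hcD : Continuous fun x => ‖fderiv ℝ v x‖ₑ ^ p :=
    (ENNReal.continuous_rpow_const).comp (hv.continuous_fderiv one_ne_zero).enorm
  have hcD1 : Continuous fun x => ‖fderiv ℝ v x‖ₑ := (hv.continuous_fderiv one_ne_zero).enorm
  have hint : IntegrableOn v Q μ := hv.continuous.continuousOn.integrableOn_compact (isCompact_closedBall c r)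
  have h1 : ∀ x, ‖(⨍ y in Q, v y ∂μ) - v x‖ₑ ^ p ≤ (μ Q)⁻¹ * ∫⁻ y in Q, ‖v y - v x‖ₑ ^ p ∂μ := by
    intro x
    refine le_trans ?_ (jensenSet μ Q h0 hT (fun y => ‖v y - v x‖ₑ)
      (hv.continuous.sub continuous_const).enorm.aemeasurable hp)
    apply ENNReal.rpow_le_rpow _ hp0
    have e : (⨍ y in Q, v y ∂μ) - v x = ⨍ y in Q, (v y - v x) ∂μ := by
      rw [setAverage_eq, setAverage_eq, integral_sub hint (integrableOn_const hT),
        setIntegral_const, smul_sub, smul_smul]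
      rw [inv_mul_cancel₀, one_smul]
      exact (ENNReal.toReal_pos h0 hT).ne'
    rw [e, setAverage_eq, enorm_smul]
    gcongr
    · simp [Measure.real, enorm_inv, (ENNReal.toReal_pos h0 hT).ne', hT]
    · exact enorm_integral_le_lintegral_enorm _
  have h2 : ∀ x ∈ Q, ∀ y ∈ Q, ‖v y - v x‖ₑ ^ p ≤ ENNReal.ofReal (2 * r) ^ p *
      ∫⁻ t in Icc (0:ℝ) 1, ‖fderiv ℝ v ((1 - t) • x + t • y)‖ₑ ^ p := by
    intro x hx y hy
    have hd : ‖y - x‖ₑ ≤ ENNReal.ofReal (2 * r) := by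
      rw [← ofReal_norm]
      apply ENNReal.ofReal_le_ofReal
      rw [← dist_eq_norm]
      rw [hQ, mem_closedBall] at hx hy
      linarith [dist_triangle_right y x c]
    have hj := jensenSet volume (Icc (0:ℝ) 1) (by simp) (by simp)
      (fun t => ‖fderiv ℝ v ((1 - t) • x + t • y)‖ₑ)
      (Continuous.aemeasurable (hcD1.comp (by fun_prop))) hp
    simp only [Real.volume_Icc, sub_zero, ENNReal.ofReal_one, inv_one, one_mul] at hj
    calc _ ≤ ((∫⁻ t in Icc (0:ℝ) 1, ‖fderiv ℝ v ((1 - t) • x + t • y)‖ₑ) * ‖y - x‖ₑ) ^ p :=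
          ENNReal.rpow_le_rpow (ftc_le v hv x y) hp0
      _ = ‖y - x‖ₑ ^ p * (∫⁻ t in Icc (0:ℝ) 1, ‖fderiv ℝ v ((1 - t) • x + t • y)‖ₑ) ^ p := by
          rw [ENNReal.mul_rpow_of_nonneg _ _ hp0, mul_comm]
      _ ≤ _ := by gcongr
  calc _ ≤ ∫⁻ x in Q, (μ Q)⁻¹ * ∫⁻ y in Q, (ENNReal.ofReal (2 * r) ^ p *
      ∫⁻ t in Icc (0:ℝ) 1, ‖fderiv ℝ v ((1 - t) • x + t • y)‖ₑ ^ p) ∂μ ∂μ := by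
        refine setLIntegral_mono' measurableSet_closedBall fun x hx => (h1 x).trans ?_
        refine mul_le_mul' le_rfl ?_
        exact setLIntegral_mono' measurableSet_closedBall fun y hy => h2 x hx y hy
    _ = (μ Q)⁻¹ * ENNReal.ofReal (2 * r) ^ p * ∫⁻ x in Q, ∫⁻ y in Q,
      ∫⁻ t in Icc (0:ℝ) 1, ‖fderiv ℝ v ((1 - t) • x + t • y)‖ₑ ^ p ∂volume ∂μ ∂μ := by
        rw [← lintegral_const_mul']
        · congr 1; ext x
          rw [lintegral_const_mul']
          · rw [mul_assoc]
          · exact ENNReal.rpow_ne_top_of_nonneg hp0 ENNReal.ofReal_ne_top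
        · exact ENNReal.mul_ne_top (by simp [h0]) (ENNReal.rpow_ne_top_of_nonneg hp0 ENNReal.ofReal_ne_top)
    _ = (μ Q)⁻¹ * ENNReal.ofReal (2 * r) ^ p * ∫⁻ t in Icc (0:ℝ) 1, ∫⁻ x in Q, ∫⁻ y in Q,
       ‖fderiv ℝ v ((1 - t) • x + t • y)‖ₑ ^ p ∂μ ∂μ := by
        congr 1
        exact triple_swap μ Q _ hcD
    _ ≤ (μ Q)⁻¹ * ENNReal.ofReal (2 * r) ^ p * ∫⁻ t in Icc (0:ℝ) 1,
        2 ^ Module.finrank ℝ E * (∫⁻ x in Q, ‖fderiv ℝ v x‖ₑ ^ p ∂μ) * μ Q := by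
        refine mul_le_mul' le_rfl ?_
        exact setLIntegral_mono' measurableSet_Icc fun t ht =>
          double_le μ c r _ hcD.measurable ht.1 ht.2
    _ = ((μ Q)⁻¹ * μ Q) * (2 ^ Module.finrank ℝ E * ENNReal.ofReal (2 * r) ^ p *
        ∫⁻ x in Q, ‖fderiv ℝ v x‖ₑ ^ p ∂μ) := by
        rw [setLIntegral_const]; simp; ring
    _ = _ := by rw [ENNReal.inv_mul_cancel h0 hT, one_mul]

theorem center_osc (x : E) {r : ℝ} (u : E → ℝ) (hu : ContDiff ℝ 1 u) (A : ℝ≥0∞)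
    (hA : ∀ s > 0, ∫⁻ z in ball x s, ‖fderiv ℝ u z‖ₑ ∂μ ≤ A * μ (ball x s)) :
    ∫⁻ z in ball x r, ‖u z - u x‖ₑ ∂μ ≤ ENNReal.ofReal r * A * μ (ball x r) := by
  rcases le_or_gt r 0 with hr | hr
  · simp [ball_eq_empty.2 hr]
  have hcD1 : Continuous fun x => ‖fderiv ℝ u x‖ₑ := (hu.continuous_fderiv one_ne_zero).enorm
  calc _ ≤ ∫⁻ z in ball x r, ENNReal.ofReal r * ∫⁻ t in Icc (0:ℝ) 1, ‖fderiv ℝ u ((1 - t) • x + t • z)‖ₑ ∂volume ∂μ := by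
        refine setLIntegral_mono' measurableSet_ball fun z hz => (ftc_le u hu x z).trans ?_
        rw [mul_comm]
        gcongr
        rw [← ofReal_norm]
        apply ENNReal.ofReal_le_ofReal
        rw [← dist_eq_norm]
        exact (mem_ball.1 hz).le
    _ = ENNReal.ofReal r * ∫⁻ t in Icc (0:ℝ) 1, ∫⁻ z in ball x r, ‖fderiv ℝ u ((1 - t) • x + t • z)‖ₑ ∂μ := by
        rw [lintegral_const_mul' _ _ ENNReal.ofReal_ne_top]
        congr 1
        exact lintegral_lintegral_swap (Continuous.measurable (hcD1.comp
          (by fun_prop : Continuous fun z : E × ℝ => (1 - z.2) • x + z.2 • z.1))).aemeasurable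
    _ ≤ ENNReal.ofReal r * ∫⁻ t in Icc (0:ℝ) 1, A * μ (ball x r) := by
        refine mul_le_mul' le_rfl ?_
        rw [setLIntegral_congr (Ioc_ae_eq_Icc (a := (0:ℝ)) (b := 1)).symm,
          setLIntegral_congr (Ioc_ae_eq_Icc (a := (0:ℝ)) (b := 1)).symm]
        refine setLIntegral_mono' measurableSet_Ioc fun t ht => ?_
        have ht0 : 0 < t := ht.1
        have hi : ∀ z, (ball x r).indicator (fun z => ‖fderiv ℝ u ((1 - t) • x + t • z)‖ₑ) z
            = (ball x (t * r)).indicator (fun z => ‖fderiv ℝ u z‖ₑ) (t • z + (1 - t) • x) := by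
          intro z
          have : (t • z + (1 - t) • x ∈ ball x (t * r)) ↔ z ∈ ball x r := by
            rw [mem_ball, mem_ball, dist_eq_norm, dist_eq_norm,
              show t • z + (1 - t) • x - x = t • (z - x) by module, norm_smul, Real.norm_eq_abs,
              abs_of_pos ht0]
            exact mul_lt_mul_iff_right₀ ht0
          by_cases hz : z ∈ ball x r
          · rw [indicator_of_mem hz, indicator_of_mem (this.2 hz), add_comm]
          · rw [indicator_of_notMem hz, indicator_of_notMem (fun h => hz (this.1 h))]
        rw [← lintegral_indicator measurableSet_ball]
        simp_rw [hi]
        rw [lintegral_affine μ _ ht0.ne', lintegral_indicator measurableSet_ball]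
        refine (mul_le_mul_right (hA (t * r) (by positivity)) _).trans ?_
        rw [Measure.addHaar_ball_of_pos μ x (by positivity : (0:ℝ) < t * r), Measure.addHaar_ball_of_pos μ x hr, mul_pow,
          ENNReal.ofReal_mul (by positivity)]
        rw [show ∀ a b c d e : ℝ≥0∞, a * (b * (c * d * e)) = (a * c) * (b * (d * e)) by
          intros; ring]
        rw [← ENNReal.ofReal_mul (by positivity), abs_of_pos (by positivity),
          inv_mul_cancel₀ (by positivity)]
        simp
    _ = _ := by rw [setLIntegral_const]; simp [mul_assoc]

theorem lip_of_max (x y : E) (u : E → ℝ) (hu : ContDiff ℝ 1 u) {A : ℝ} (hA0 : 0 ≤ A)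
    (hx : ∀ s > 0, ∫⁻ z in ball x s, ‖fderiv ℝ u z‖ₑ ∂μ ≤ ENNReal.ofReal A * μ (ball x s))
    (hy : ∀ s > 0, ∫⁻ z in ball y s, ‖fderiv ℝ u z‖ₑ ∂μ ≤ ENNReal.ofReal A * μ (ball y s)) :
    |u x - u y| ≤ 2 ^ (Module.finrank ℝ E + 1) * A * dist x y := by
  rcases eq_or_ne x y with rfl | hxy
  · simp
  set r := dist x y with hr
  have hr0 : 0 < r := dist_pos.2 hxy
  set d := Module.finrank ℝ E
  set m := midpoint ℝ x y
  set B := ball m (r / 2)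
  have hB0 : μ B ≠ 0 := (measure_ball_pos μ m (by positivity)).ne'
  have hBT : μ B ≠ ∞ := measure_ball_lt_top.ne
  have hBx : B ⊆ ball x r := ball_subset_ball' (by
    have : dist m x = r / 2 := by rw [dist_midpoint_left, Real.norm_ofNat]; ring
    linarith)
  have hBy : B ⊆ ball y r := ball_subset_ball' (by
    have : dist m y = r / 2 := by rw [dist_midpoint_right, Real.norm_ofNat]; ring
    linarith)
  have hvol : ∀ w, μ (ball w r) = 2 ^ d * μ B := by
    intro w
    rw [Measure.addHaar_ball_of_pos μ w hr0, Measure.addHaar_ball_of_pos μ m (by positivity : 0 < r / 2),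
      ← mul_assoc]
    congr 1
    rw [show r ^ Module.finrank ℝ E = 2 ^ d * (r / 2) ^ d by rw [← mul_pow]; congr 1; ring,
      ENNReal.ofReal_mul (by positivity), ENNReal.ofReal_pow (by norm_num)]
    simp [d]
  have key : ENNReal.ofReal (|u x - u y|) * μ B
      ≤ ENNReal.ofReal (2 ^ (d + 1) * A * r) * μ B := by
    calc _ = ∫⁻ z in B, ‖u x - u y‖ₑ ∂μ := by
          rw [setLIntegral_const, Real.enorm_eq_ofReal_abs]
      _ ≤ ∫⁻ z in B, (‖u z - u x‖ₑ + ‖u z - u y‖ₑ) ∂μ := by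
          refine lintegral_mono fun z => ?_
          rw [show u x - u y = (u z - u y) - (u z - u x) by ring, add_comm]
          exact enorm_sub_le
      _ = ∫⁻ z in B, ‖u z - u x‖ₑ ∂μ + ∫⁻ z in B, ‖u z - u y‖ₑ ∂μ :=
          lintegral_add_left (hu.continuous.sub continuous_const).enorm.measurable _
      _ ≤ ENNReal.ofReal r * ENNReal.ofReal A * μ (ball x r)
          + ENNReal.ofReal r * ENNReal.ofReal A * μ (ball y r) :=
          add_le_add ((lintegral_mono_set hBx).trans (center_osc μ x u hu _ hx))
            ((lintegral_mono_set hBy).trans (center_osc μ y u hu _ hy))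
      _ = _ := by
          rw [hvol, hvol, mul_assoc (2 ^ (d + 1)), ENNReal.ofReal_mul (by positivity), ENNReal.ofReal_mul hA0,
            ENNReal.ofReal_pow (by norm_num)]
          simp; ring
  rw [ENNReal.mul_le_mul_iff_left hB0 hBT] at key
  exact (ENNReal.ofReal_le_ofReal_iff (by positivity)).1 key
end

set_option linter.unusedSectionVars false

/-- pointwise slope bound -/
def Sl {E : Type*} [NormedAddCommGroup E] (w : E → ℝ) (x : E) (c : ℝ) : Prop :=
  ∀ ε > 0, ∀ᶠ y in 𝓝 x, |w y - w x| ≤ (c + ε) * ‖y - x‖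

section
variable {E : Type*} [NormedAddCommGroup E]

theorem Sl.max {w₁ w₂ : E → ℝ} {x : E} {c₁ c₂ : ℝ} (h₁ : Sl w₁ x c₁) (h₂ : Sl w₂ x c₂) :
    Sl (fun y => max (w₁ y) (w₂ y)) x (max c₁ c₂) := by
  intro ε hε
  filter_upwards [h₁ ε hε, h₂ ε hε] with y h1 h2
  refine (abs_max_sub_max_le_max _ _ _ _).trans (max_le (h1.trans ?_) (h2.trans ?_))
  · gcongr; exact le_max_left _ _
  · gcongr; exact le_max_right _ _

theorem Sl.add {w₁ w₂ : E → ℝ} {x : E} {c₁ c₂ : ℝ} (h₁ : Sl w₁ x c₁) (h₂ : Sl w₂ x c₂) :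
    Sl (fun y => w₁ y + w₂ y) x (c₁ + c₂) := by
  intro ε hε
  filter_upwards [h₁ (ε / 2) (by positivity), h₂ (ε / 2) (by positivity)] with y h1 h2
  calc |w₁ y + w₂ y - (w₁ x + w₂ x)| = |(w₁ y - w₁ x) + (w₂ y - w₂ x)| := by ring_nf
    _ ≤ _ := (abs_add_le _ _).trans (add_le_add h1 h2)
    _ = _ := by ring

theorem Sl.mono {w : E → ℝ} {x : E} {c c' : ℝ} (h : Sl w x c) (hc : c ≤ c') : Sl w x c' := by
  intro ε hε
  filter_upwards [h ε hε] with y h1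
  exact h1.trans (by gcongr)

theorem Sl.norm_fderiv_le [NormedSpace ℝ E] {w : E → ℝ} {x : E} {c : ℝ} (h : Sl w x c) (hc : 0 ≤ c) :
    ‖fderiv ℝ w x‖ ≤ c :=
  le_of_forall_pos_le_add fun ε hε =>
    norm_fderiv_le_of_lip' ℝ (by positivity) (h ε hε)

theorem sl_of_differentiable [NormedSpace ℝ E] {w : E → ℝ} {x : E} (h : DifferentiableAt ℝ w x) :
    Sl w x ‖fderiv ℝ w x‖ := by
  intro ε hε
  have := h.hasFDerivAt.isLittleO.def hε
  filter_upwards [this] with y hy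
  calc |w y - w x| = ‖(w y - w x - fderiv ℝ w x (y - x)) + fderiv ℝ w x (y - x)‖ := by
        rw [Real.norm_eq_abs]; ring_nf
    _ ≤ ε * ‖y - x‖ + ‖fderiv ℝ w x‖ * ‖y - x‖ :=
        (norm_add_le _ _).trans (add_le_add hy (ContinuousLinearMap.le_opNorm _ _))
    _ = _ := by ring

theorem sl_of_lip {w : E → ℝ} {L : ℝ≥0} (h : LipschitzWith L w) (x : E) : Sl w x L := by
  intro ε hε
  refine Eventually.of_forall fun y => ?_
  have := h.dist_le_mul y x
  rw [Real.dist_eq, dist_eq_norm] at this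
  exact this.trans (by gcongr; linarith)

theorem finite_max {ι : Type*} (t : Finset ι) (h G : ι → E → ℝ) {p : ℝ} (hp : 0 < p)
    (lip : ∀ i ∈ t, ∃ L, LipschitzWith L (h i)) (cs : ∀ i ∈ t, HasCompactSupport (h i))
    (sl : ∀ i ∈ t, ∀ x, Sl (h i) x (G i x)) :
    ∃ w : E → ℝ, (∃ L, LipschitzWith L w) ∧ HasCompactSupport w ∧ (∀ x, 0 ≤ w x) ∧
      (∀ i ∈ t, ∀ x, h i x ≤ w x) ∧ ∃ H : E → ℝ, (∀ x, 0 ≤ H x) ∧ (∀ x, Sl w x (H x)) ∧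
      ∀ x, ENNReal.ofReal (H x) ^ p ≤ ∑ i ∈ t, ENNReal.ofReal (G i x) ^ p := by
  classical
  induction t using Finset.induction_on with
  | empty =>
    refine ⟨fun _ => 0, ⟨0, LipschitzWith.const 0⟩, HasCompactSupport.zero, by simp, by simp,
      fun _ => 0, by simp, fun x ε hε => ?_, by simp [hp]⟩
    refine Eventually.of_forall fun y => ?_
    simp; positivity
  | insert a s ha ih =>
    obtain ⟨w, ⟨L, hL⟩, hc, h0, hle, H, hH0, hsl, hH⟩ := ih (fun i hi => lip i (by simp [hi]))
      (fun i hi => cs i (by simp [hi])) (fun i hi => sl i (by simp [hi]))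
    obtain ⟨L', hL'⟩ := lip a (by simp)
    refine ⟨fun x => max (h a x) (w x), ⟨_, hL'.max hL⟩, ?_, fun x => le_max_of_le_right (h0 x), ?_,
      fun x => max (G a x) (H x), fun x => le_max_of_le_right (hH0 x),
      fun x => (sl a (by simp) x).max (hsl x), ?_⟩
    · exact (cs a (by simp)).comp₂_left hc (by simp)
    · intro i hi x
      rcases Finset.mem_insert.1 hi with rfl | hi
      · exact le_max_left _ _
      · exact le_max_of_le_right (hle i hi x)
    · intro x
      rw [Finset.sum_insert ha]
      beta_reduce
      rcases le_total (G a x) (H x) with hh | hh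
      · rw [max_eq_right hh]; exact (hH x).trans le_add_self
      · rw [max_eq_left hh]; exact le_self_add

end

section
variable {E : Type*} [NormedAddCommGroup E] [NormedSpace ℝ E] [FiniteDimensional ℝ E]
  [MeasurableSpace E] [BorelSpace E] (μ : Measure E) [μ.IsAddHaarMeasure]

theorem young (ψ K : E → ℝ≥0∞) (hψ : Measurable ψ) (hK : Measurable K) (h1 : ∫⁻ x, ψ x ∂μ = 1)
    {p : ℝ} (hp : 1 ≤ p) :
    ∫⁻ x, (∫⁻ t, ψ t * K (x - t) ∂μ) ^ p ∂μ ≤ ∫⁻ x, K x ^ p ∂μ := by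
  have : IsProbabilityMeasure (μ.withDensity ψ) := ⟨by simp [h1]⟩
  have hj : ∀ x, (∫⁻ t, ψ t * K (x - t) ∂μ) ^ p ≤ ∫⁻ t, ψ t * K (x - t) ^ p ∂μ := by
    intro x
    have hm : Measurable fun t => K (x - t) := hK.comp (measurable_const.sub measurable_id)
    have h := jensenP (μ.withDensity ψ) (fun t => K (x - t))
      hm.aemeasurable hp
    rwa [lintegral_withDensity_eq_lintegral_mul _ hψ hm,
      lintegral_withDensity_eq_lintegral_mul _ hψ (hm.pow_const p)] at h
  calc _ ≤ ∫⁻ x, ∫⁻ t, ψ t * K (x - t) ^ p ∂μ ∂μ := lintegral_mono hj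
    _ = ∫⁻ t, ∫⁻ x, ψ t * K (x - t) ^ p ∂μ ∂μ := by
        refine lintegral_lintegral_swap (Measurable.aemeasurable ?_)
        exact (hψ.comp measurable_snd).mul ((hK.comp (measurable_fst.sub measurable_snd)).pow_const p)
    _ = ∫⁻ t, ψ t * ∫⁻ x, K x ^ p ∂μ ∂μ := by
        congr 1; ext t
        have hm : Measurable fun x => K (x - t) ^ p := ((hK.comp (measurable_id.sub measurable_const)).pow_const p)
        rw [lintegral_const_mul _ hm]
        congr 1
        exact lintegral_sub_right_eq_self (fun x => K x ^ p) t
    _ = _ := by rw [lintegral_mul_const _ hψ, h1, one_mul]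

theorem bump_lintegral (φ : ContDiffBump (0 : E)) : ∫⁻ x, ‖φ.normed μ x‖ₑ ∂μ = 1 := by
  rw [← ofReal_integral_norm_eq_lintegral_enorm φ.integrable_normed]
  simp_rw [Real.norm_of_nonneg (φ.nonneg_normed _)]
  rw [φ.integral_normed]; simp

open ContinuousLinearMap in
theorem moll_energy (φ : ContDiffBump (0 : E)) (w : E → ℝ) {L : ℝ≥0} (hL : LipschitzWith L w)
    (x : E) :
    HasFDerivAt (convolution (φ.normed μ) w (lsmul ℝ ℝ) μ)
      (∫ t, φ.normed μ t • fderiv ℝ w (x - t) ∂μ) x := by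
  have hψc : Continuous (φ.normed μ) := φ.continuous_normed
  have hψs : HasCompactSupport (φ.normed μ) := φ.hasCompactSupport_normed
  have hmeasD : Measurable (fderiv ℝ w) := measurable_fderiv ℝ w
  have hcx : ∀ y : E, Continuous fun t => φ.normed μ t * w (y - t) := fun y =>
    hψc.mul (hL.continuous.comp (continuous_const.sub continuous_id))
  have hm : AEStronglyMeasurable (fun t => φ.normed μ t • fderiv ℝ w (x - t)) μ :=
    (hψc.measurable.smul (hmeasD.comp (measurable_const.sub measurable_id))).aestronglyMeasurable
  refine (hasFDerivAt_integral_of_dominated_loc_of_lip (s := univ)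
    (F := fun x t => φ.normed μ t * (w (x - t))) (bound := fun t => ‖φ.normed μ t‖ * L)
    univ_mem (Eventually.of_forall fun y => (hcx y).aestronglyMeasurable)
    ((hcx x).integrable_of_hasCompactSupport hψs.mul_right) hm ?_
    (φ.integrable_normed.norm.mul_const _) ?_).2
  · refine Eventually.of_forall fun t => LipschitzWith.lipschitzOnWith ?_
    refine LipschitzWith.of_dist_le_mul fun a b => ?_
    rw [Real.dist_eq, ← mul_sub, abs_mul]
    have := hL.dist_le_mul (a - t) (b - t)
    rw [dist_sub_right, Real.dist_eq] at this
    simp only [Real.coe_nnabs, abs_mul, Real.norm_eq_abs, abs_abs, NNReal.abs_eq]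
    rw [mul_assoc]
    gcongr
  · have h1 : ∀ᵐ t ∂μ, DifferentiableAt ℝ w (x - t) :=
      (quasiMeasurePreserving_sub_left μ x).ae hL.ae_differentiableAt
    filter_upwards [h1] with t ht
    have h2 : HasFDerivAt (fun y => w (y - t)) (fderiv ℝ w (x - t)) x := by
      have := ht.hasFDerivAt.comp x ((hasFDerivAt_id x).sub_const t)
      rwa [ContinuousLinearMap.comp_id] at this
    exact h2.const_smul (φ.normed μ t)


open ContinuousLinearMap in
theorem moll_young (φ : ContDiffBump (0 : E)) (w : E → ℝ) {L : ℝ≥0} (hL : LipschitzWith L w)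
    {p : ℝ} (hp : 1 ≤ p) :
    ∫⁻ x, ‖fderiv ℝ (convolution (φ.normed μ) w (lsmul ℝ ℝ) μ) x‖ₑ ^ p ∂μ
      ≤ ∫⁻ x, ‖fderiv ℝ w x‖ₑ ^ p ∂μ := by
  have hp0 : 0 ≤ p := by linarith
  have hψc : Continuous (φ.normed μ) := φ.continuous_normed
  have hmeasD : Measurable (fderiv ℝ w) := measurable_fderiv ℝ w
  refine le_trans (lintegral_mono fun x => ?_)
    (young μ (fun t => ‖φ.normed μ t‖ₑ) (fun x => ‖fderiv ℝ w x‖ₑ) hψc.measurable.enorm hmeasD.enorm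
      (bump_lintegral μ φ) hp)
  refine ENNReal.rpow_le_rpow ?_ hp0
  rw [(moll_energy μ φ w hL x).fderiv]
  refine (enorm_integral_le_lintegral_enorm _).trans (le_of_eq ?_)
  simp_rw [enorm_smul]

open ContinuousLinearMap in
theorem moll_contDiff (φ : ContDiffBump (0 : E)) (w : E → ℝ) (hw : LocallyIntegrable w μ) :
    ContDiff ℝ ((⊤ : ℕ∞) : WithTop ℕ∞) (convolution (φ.normed μ) w (lsmul ℝ ℝ) μ) :=
  HasCompactSupport.contDiff_convolution_left (lsmul ℝ ℝ) φ.hasCompactSupport_normed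
      (φ.contDiff_normed (n := (⊤ : ℕ∞))) hw

theorem bump_exists {r : ℝ} (hr : 0 < r) : ∃ φ : ContDiffBump (0 : E), φ.rOut = r :=
    ⟨⟨r / 2, r, by positivity, half_lt_self hr⟩, rfl⟩

open ContinuousLinearMap in
theorem moll_exists (w : E → ℝ) {L : ℝ≥0}
    (hL : LipschitzWith L w) (hc : HasCompactSupport w) {p : ℝ} (hp : 1 ≤ p) :
    ∃ g : E → ℝ, ContDiff ℝ (⊤ : ℕ∞) g ∧ HasCompactSupport g ∧ (∀ x, |g x - w x| ≤ 1 / 2) ∧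
      ∫⁻ x, ‖fderiv ℝ g x‖ₑ ^ p ∂μ ≤ ∫⁻ x, ‖fderiv ℝ w x‖ₑ ^ p ∂μ := by
  obtain ⟨φ, hφ⟩ := bump_exists (E := E) (r := 1 / (2 * (L + 1))) (by positivity)
  have hcs := HasCompactSupport.convolution (μ := μ) (lsmul ℝ ℝ) (φ.hasCompactSupport_normed (μ := μ)) hc
  have hcd := moll_contDiff μ φ w hL.continuous.locallyIntegrable
  refine ⟨convolution (φ.normed μ) w (lsmul ℝ ℝ) μ, hcd,
    hcs, fun x => ?_, moll_young μ φ w hL hp⟩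
  rw [← Real.dist_eq]
  refine φ.dist_normed_convolution_le hL.continuous.aestronglyMeasurable fun y hy => ?_
  have h1 := hL.dist_le_mul y x
  have h2 : dist y x < 1 / (2 * (L + 1)) := by rw [← hφ]; exact hy
  have hL0 : (0:ℝ) ≤ L := L.2
  calc dist (w y) (w x) ≤ L * dist y x := h1
    _ ≤ L * (1 / (2 * (L + 1))) := by gcongr
    _ ≤ 1 / 2 := by
      rw [mul_one_div, div_le_div_iff₀ (by positivity) (by norm_num)]; linarith

end

theorem capK_le {n : ℕ} {p : ℝ} (hp : 1 ≤ p) (F : Set (En n)) (w : En n → ℝ) {L : ℝ≥0}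
    (hL : LipschitzWith L w) (hc : HasCompactSupport w) (hF : ∀ x ∈ F, 1 ≤ w x) :
    capK p F ≤ 2 ^ p * ∫⁻ x, ‖fderiv ℝ w x‖ₑ ^ p := by
  have hp0 : 0 ≤ p := by linarith
  obtain ⟨g, hgsm, hgcs, hgd, hen⟩ := moll_exists volume w hL hc hp
  unfold capK
  refine iInf₂_le_of_le (fun x : En n => 2 * g x) ⟨contDiff_const.mul hgsm, hgcs.mul_left, fun x hx => ?_⟩ ?_
  · have := abs_le.1 (hgd x); linarith [hF x hx]
  · refine le_trans (le_of_eq ?_) (mul_le_mul' le_rfl hen)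
    rw [← lintegral_const_mul' _ _ (ENNReal.rpow_ne_top_of_nonneg hp0 (by simp))]
    refine lintegral_congr fun x => ?_
    have : fderiv ℝ (fun x => 2 * g x) x = (2:ℝ) • fderiv ℝ g x :=
      fderiv_const_mul (hgsm.differentiable (by simp) x) 2
    rw [this, ← enorm_eq_nnnorm, enorm_smul, ENNReal.mul_rpow_of_nonneg _ _ hp0]
    congr 2
    rw [Real.enorm_eq_ofReal_abs]; simp

theorem capOpen_iUnion {n : ℕ} {p : ℝ} (hp : 1 ≤ p) {ι : Type*} [Countable ι] (U : ι → Set (En n)) (hU : ∀ i, IsOpen (U i)) :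
    capOpen p (⋃ i, U i) ≤ 2 ^ p * ∑' i, capOpen p (U i) := by
  have hp0 : 0 < p := by linarith
  have h2 : (2:ℝ≥0∞) ^ p ≠ ∞ := ENNReal.rpow_ne_top_of_nonneg hp0.le (by simp)
  by_cases hinf : ∑' i, capOpen p (U i) = ∞
  · rw [hinf, ENNReal.mul_top]; · exact le_top
    · simp
  refine iSup₂_le fun F ⟨hFU, hFc⟩ => ?_
  refine ENNReal.le_of_forall_pos_le_add fun ε hε _ => ?_
  have h20 : (2:ℝ≥0∞) ^ p ≠ 0 := by simp
  obtain ⟨δ, hδ0, hδ⟩ := ENNReal.exists_pos_sum_of_countable (ε := ε / 2 ^ p)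
    (ENNReal.div_pos (by simpa using hε.ne') h2).ne' ι
  obtain ⟨t, ht⟩ := hFc.elim_finite_subcover U hU hFU
  obtain ⟨K, hK, hKU, rfl⟩ := hFc.finite_compact_cover t U (fun i _ => hU i) ht
  have hch : ∀ i, ∃ g : En n → ℝ, (ContDiff ℝ (⊤ : ℕ∞) g ∧ HasCompactSupport g ∧ ∀ x ∈ K i, 1 ≤ g x) ∧
      ∫⁻ x, (‖fderiv ℝ g x‖₊ : ℝ≥0∞) ^ p < capOpen p (U i) + δ i := by
    intro i
    have h1 : capK p (K i) ≤ capOpen p (U i) := le_iSup₂_of_le (K i) ⟨hKU i, hK i⟩ le_rfl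
    have h3 : capOpen p (U i) ≠ ∞ := ENNReal.ne_top_of_tsum_ne_top hinf i
    have h4 : capK p (K i) < capOpen p (U i) + δ i :=
      h1.trans_lt (ENNReal.lt_add_right h3 (by simpa using (hδ0 i).ne'))
    unfold capK at h4
    simpa [iInf_lt_iff] using h4
  choose g hg hge using hch
  obtain ⟨w, ⟨L, hL⟩, hc, h0, hle, H, hH0, hsl, hH⟩ := finite_max t g (fun i x => ‖fderiv ℝ (g i) x‖) hp0
    (fun i _ => ((hg i).1.of_le (by simp : (1 : WithTop ℕ∞) ≤ _)).lipschitzWith_of_hasCompactSupport (hg i).2.1 (by simp))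
    (fun i _ => (hg i).2.1)
    (fun i _ x => sl_of_differentiable ((hg i).1.differentiable (by simp) x))
  refine (capK_le hp _ w hL hc ?_).trans ?_
  · intro x hx
    obtain ⟨i, hi, hxi⟩ := mem_iUnion₂.1 hx
    exact ((hg i).2.2 x hxi).trans (hle i hi x)
  · calc _ ≤ 2 ^ p * ∫⁻ x, ∑ i ∈ t, ENNReal.ofReal ‖fderiv ℝ (g i) x‖ ^ p := by
          refine mul_le_mul' le_rfl (lintegral_mono fun x => le_trans ?_ (hH x))
          refine ENNReal.rpow_le_rpow ?_ hp0.le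
          rw [← ofReal_norm]
          exact ENNReal.ofReal_le_ofReal ((hsl x).norm_fderiv_le (hH0 x))
      _ = 2 ^ p * ∑ i ∈ t, ∫⁻ x, ENNReal.ofReal ‖fderiv ℝ (g i) x‖ ^ p := by
          congr 1
          refine lintegral_finsetSum _ fun i _ => ?_
          exact (measurable_fderiv ℝ (g i)).norm.ennreal_ofReal.pow_const p
      _ ≤ 2 ^ p * ∑ i ∈ t, (capOpen p (U i) + δ i) := by
          refine mul_le_mul' le_rfl (Finset.sum_le_sum fun i _ => ?_)
          simp_rw [ofReal_norm]
          exact (hge i).le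
      _ ≤ 2 ^ p * ∑' i, (capOpen p (U i) + δ i) :=
          mul_le_mul' le_rfl (ENNReal.sum_le_tsum t)
      _ ≤ 2 ^ p * (∑' i, capOpen p (U i)) + 2 ^ p * (ε / 2 ^ p) := by
          rw [ENNReal.tsum_add, mul_add]
          gcongr
      _ = _ := by rw [ENNReal.mul_div_cancel h20 h2]


section
variable {n : ℕ}

noncomputable def fold1 (c r x : ℝ) : ℝ := c + max (min (x - c) (2 * r - (x - c))) (-(2 * r) - (x - c))

noncomputable def refl1 (c r : ℝ) (j : Fin 3) (x : ℝ) : ℝ :=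
  if j = 0 then x else if j = 1 then 2 * (c + r) - x else 2 * (c - r) - x

theorem fold1_lip (c r x y : ℝ) : |fold1 c r x - fold1 c r y| ≤ |x - y| := by
  unfold fold1
  have h1 := abs_max_sub_max_le_max (min (x - c) (2 * r - (x - c))) (-(2 * r) - (x - c))
    (min (y - c) (2 * r - (y - c))) (-(2 * r) - (y - c))
  have h2 := abs_min_sub_min_le_max (x - c) (2 * r - (x - c)) (y - c) (2 * r - (y - c))
  have e1 : x - c - (y - c) = x - y := by ring
  have e2 : 2 * r - (x - c) - (2 * r - (y - c)) = -(x - y) := by ring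
  have e3 : -(2 * r) - (x - c) - (-(2 * r) - (y - c)) = -(x - y) := by ring
  rw [e1, e2, abs_neg, max_self] at h2
  rw [e3, abs_neg] at h1
  rw [add_sub_add_left_eq_sub]
  exact h1.trans (max_le h2 le_rfl)

theorem fold1_id {c r x : ℝ} (h : |x - c| ≤ r) : fold1 c r x = x := by
  have := abs_le.1 h
  unfold fold1
  rw [min_eq_left (by linarith), max_eq_left (by linarith)]; ring

theorem fold1_maps {c r x : ℝ} (h : |x - c| ≤ 2 * r) : |fold1 c r x - c| ≤ r := by
  have := abs_le.1 h
  unfold fold1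
  rw [add_sub_cancel_left, abs_le]
  refine ⟨?_, max_le ?_ (by linarith)⟩
  · rcases le_total (-r) (x - c) with h1 | h1
    · exact le_max_of_le_left (le_min h1 (by linarith))
    · exact le_max_of_le_right (by linarith)
  · rcases le_total (x - c) r with h1 | h1
    · exact (min_le_left _ _).trans h1
    · exact (min_le_right _ _).trans (by linarith)

theorem fold1_refl (c r x : ℝ) : ∃ j, fold1 c r x = refl1 c r j x := by
  unfold fold1
  rcases max_choice (min (x - c) (2 * r - (x - c))) (-(2 * r) - (x - c)) with h | h
  · rcases min_choice (x - c) (2 * r - (x - c)) with h' | h'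
    · exact ⟨0, by rw [h, h']; simp [refl1]⟩
    · exact ⟨1, by rw [h, h']; simp [refl1]; ring⟩
  · exact ⟨2, by rw [h]; simp [refl1]; ring⟩

theorem refl1_mp (c r : ℝ) (j : Fin 3) : MeasurePreserving (refl1 c r j) := by
  unfold refl1
  split_ifs
  · exact MeasurePreserving.id _
  · exact Measure.measurePreserving_sub_left volume _
  · exact Measure.measurePreserving_sub_left volume _

noncomputable def foldn (c : Fin n → ℝ) (r : ℝ) (x : Fin n → ℝ) : Fin n → ℝ :=
  fun i => fold1 (c i) r (x i)

theorem foldn_lip (c : Fin n → ℝ) (r : ℝ) (x y : Fin n → ℝ) :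
    ‖foldn c r x - foldn c r y‖ ≤ ‖x - y‖ := by
  refine (pi_norm_le_iff_of_nonneg (norm_nonneg _)).2 fun i => ?_
  exact (fold1_lip (c i) r (x i) (y i)).trans (norm_le_pi_norm (x - y) i)

theorem foldn_cont (c : Fin n → ℝ) (r : ℝ) : Continuous (foldn c r) :=
  (LipschitzWith.of_dist_le_mul (K := 1) fun x y => by
    simpa [dist_eq_norm] using foldn_lip c r x y).continuous

theorem foldn_id {c : Fin n → ℝ} {r : ℝ} {x : Fin n → ℝ} (h : x ∈ closedBall c r) :
    foldn c r x = x := by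
  ext i
  rw [mem_closedBall, dist_eq_norm] at h
  exact fold1_id ((norm_le_pi_norm (x - c) i).trans h)

theorem foldn_maps {c : Fin n → ℝ} {r : ℝ} (hr : 0 ≤ r) {x : Fin n → ℝ} (h : x ∈ closedBall c (2 * r)) :
    foldn c r x ∈ closedBall c r := by
  rw [mem_closedBall, dist_eq_norm] at h ⊢
  exact (pi_norm_le_iff_of_nonneg hr).2 fun i => fold1_maps ((norm_le_pi_norm (x - c) i).trans h)

theorem foldn_lintegral (c : Fin n → ℝ) {r : ℝ} (hr : 0 ≤ r) (K : (Fin n → ℝ) → ℝ≥0∞) (hK : Measurable K) :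
    ∫⁻ x in closedBall c (2 * r), K (foldn c r x) ≤ 3 ^ n * ∫⁻ x in closedBall c r, K x := by
  obtain ⟨K', hK'def⟩ : ∃ K' : (Fin n → ℝ) → ℝ≥0∞, K' = (closedBall c r).indicator K := ⟨_, rfl⟩
  have hK' : Measurable K' := hK'def ▸ hK.indicator measurableSet_closedBall
  have hmp : ∀ σ : Fin n → Fin 3, MeasurePreserving
      (fun (x : Fin n → ℝ) (i : Fin n) => refl1 (c i) r (σ i) (x i)) :=
    fun σ => volume_preserving_pi fun i => refl1_mp _ _ _
  have h1 : ∀ σ : Fin n → Fin 3, ∫⁻ x : Fin n → ℝ, K' (fun i => refl1 (c i) r (σ i) (x i)) =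
      ∫⁻ x in closedBall c r, K x := fun σ => by
    rw [(hmp σ).lintegral_comp hK', hK'def, lintegral_indicator measurableSet_closedBall]
  have h2 : ∀ σ : Fin n → Fin 3, Measurable fun x : Fin n → ℝ => K' (fun i => refl1 (c i) r (σ i) (x i)) :=
    fun σ => hK'.comp (hmp σ).measurable
  have h3 : ∀ x, (closedBall c (2 * r)).indicator (fun x => K (foldn c r x)) x ≤
      ∑ σ : Fin n → Fin 3, K' (fun i => refl1 (c i) r (σ i) (x i)) := by
    intro x
    by_cases hx : x ∈ closedBall c (2 * r)
    swap
    · rw [indicator_of_notMem hx]; exact zero_le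
    rw [indicator_of_mem hx]
    choose σ hσ using fun i => fold1_refl (c i) r (x i)
    have h1 : (fun i => refl1 (c i) r (σ i) (x i)) = foldn c r x := funext fun i => (hσ i).symm
    have h4 : K (foldn c r x) = K' (fun i => refl1 (c i) r (σ i) (x i)) := by
      rw [h1, hK'def, indicator_of_mem (foldn_maps hr hx)]
    rw [h4]
    exact Finset.single_le_sum (f := fun σ : Fin n → Fin 3 => K' (fun i => refl1 (c i) r (σ i) (x i)))
      (fun _ _ => zero_le) (Finset.mem_univ σ)
  rw [← lintegral_indicator measurableSet_closedBall]
  refine (lintegral_mono h3).trans (le_of_eq ?_)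
  rw [lintegral_finsetSum _ fun σ _ => h2 σ]
  simp [h1]

noncomputable def cutf (c : Fin n → ℝ) (r : ℝ) (x : Fin n → ℝ) : ℝ := max 0 (min 1 (2 - r⁻¹ * ‖x - c‖))

theorem cutf_lip (c : Fin n → ℝ) {r : ℝ} (hr : 0 < r) (x y : Fin n → ℝ) :
    |cutf c r x - cutf c r y| ≤ r⁻¹ * ‖x - y‖ := by
  unfold cutf
  have h1 := abs_max_sub_max_le_max 0 (min 1 (2 - r⁻¹ * ‖x - c‖)) 0 (min 1 (2 - r⁻¹ * ‖y - c‖))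
  have h2 := abs_min_sub_min_le_max 1 (2 - r⁻¹ * ‖x - c‖) 1 (2 - r⁻¹ * ‖y - c‖)
  have h3 : |2 - r⁻¹ * ‖x - c‖ - (2 - r⁻¹ * ‖y - c‖)| ≤ r⁻¹ * ‖x - y‖ := by
    have : 2 - r⁻¹ * ‖x - c‖ - (2 - r⁻¹ * ‖y - c‖) = r⁻¹ * (‖y - c‖ - ‖x - c‖) := by ring
    rw [this, abs_mul, abs_of_pos (inv_pos.2 hr)]
    have h4 := abs_norm_sub_norm_le (y - c) (x - c)
    rw [sub_sub_sub_cancel_right, norm_sub_rev y x] at h4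
    gcongr
  have h0 : 0 ≤ r⁻¹ * ‖x - y‖ := by positivity
  simp only [sub_self, abs_zero] at h1 h2
  exact h1.trans (max_le h0 (h2.trans (max_le h0 h3)))

theorem cutf_le (c : Fin n → ℝ) (r : ℝ) (x : Fin n → ℝ) : |cutf c r x| ≤ 1 := by
  unfold cutf
  rw [abs_of_nonneg (le_max_left _ _)]
  exact max_le zero_le_one (min_le_left _ _)

theorem cutf_one {c : Fin n → ℝ} {r : ℝ} (hr : 0 < r) {x : Fin n → ℝ} (h : x ∈ closedBall c r) :
    cutf c r x = 1 := by
  rw [mem_closedBall, dist_eq_norm] at h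
  have : r⁻¹ * ‖x - c‖ ≤ 1 := by rw [inv_mul_le_iff₀ hr]; linarith
  unfold cutf
  rw [min_eq_left (by linarith)]; simp

theorem cutf_zero {c : Fin n → ℝ} {r : ℝ} (hr : 0 < r) {x : Fin n → ℝ} (h : x ∉ closedBall c (2 * r)) :
    cutf c r x = 0 := by
  rw [mem_closedBall, dist_eq_norm, not_le] at h
  have : 2 ≤ r⁻¹ * ‖x - c‖ := by rw [le_inv_mul_iff₀ hr]; linarith
  unfold cutf
  exact max_eq_left ((min_le_right _ _).trans (by linarith))

noncomputable def corr (v : (Fin n → ℝ) → ℝ) (a : ℝ) (c : Fin n → ℝ) (r : ℝ) (x : Fin n → ℝ) : ℝ :=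
  cutf c r x * (a - v (foldn c r x))

noncomputable def corrG (v : (Fin n → ℝ) → ℝ) (a : ℝ) (c : Fin n → ℝ) (r : ℝ) : (Fin n → ℝ) → ℝ :=
  (closedBall c (2 * r)).indicator
    fun x => ‖fderiv ℝ v (foldn c r x)‖ + r⁻¹ * |a - v (foldn c r x)|

theorem corr_diff (v : (Fin n → ℝ) → ℝ) (a : ℝ) (c : Fin n → ℝ) {r : ℝ} (hr : 0 < r) (x y : Fin n → ℝ) :
    |corr v a c r y - corr v a c r x| ≤ |v (foldn c r y) - v (foldn c r x)| +
      r⁻¹ * |a - v (foldn c r x)| * ‖y - x‖ := by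
  have : corr v a c r y - corr v a c r x = cutf c r y * (v (foldn c r x) - v (foldn c r y)) +
      (cutf c r y - cutf c r x) * (a - v (foldn c r x)) := by unfold corr; ring
  rw [this]
  refine (abs_add_le _ _).trans (add_le_add ?_ ?_)
  · rw [abs_mul, abs_sub_comm]
    exact mul_le_of_le_one_left (abs_nonneg _) (cutf_le _ _ _)
  · rw [abs_mul]
    calc _ ≤ r⁻¹ * ‖y - x‖ * |a - v (foldn c r x)| := by gcongr; exact cutf_lip c hr y x
      _ = _ := by ring

theorem corr_lip (v : (Fin n → ℝ) → ℝ) (hv : ContDiff ℝ 1 v) (hvc : HasCompactSupport v)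
    (a : ℝ) (c : Fin n → ℝ) {r : ℝ} (hr : 0 < r) : ∃ L, LipschitzWith L (corr v a c r) := by
  obtain ⟨L, hL⟩ := hv.lipschitzWith_of_hasCompactSupport hvc (by simp)
  obtain ⟨M, hM⟩ := hvc.exists_bound_of_continuous hv.continuous
  have hM0 : 0 ≤ M := (norm_nonneg _).trans (hM 0)
  refine ⟨(L + r⁻¹ * (|a| + M)).toNNReal, LipschitzWith.of_dist_le_mul fun y x => ?_⟩
  rw [Real.dist_eq, dist_eq_norm, Real.coe_toNNReal _ (by positivity)]
  refine (corr_diff v a c hr x y).trans ?_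
  have h1 := hL.dist_le_mul (foldn c r y) (foldn c r x)
  rw [Real.dist_eq, dist_eq_norm] at h1
  have h2 := foldn_lip c r y x
  have h3 : |a - v (foldn c r x)| ≤ |a| + M := (abs_sub _ _).trans (by gcongr; exact hM _)
  rw [add_mul]
  gcongr
  exact h1.trans (by gcongr)

theorem corr_cs (v : (Fin n → ℝ) → ℝ) (a : ℝ) (c : Fin n → ℝ) {r : ℝ} (hr : 0 < r) :
    HasCompactSupport (corr v a c r) :=
  HasCompactSupport.intro (isCompact_closedBall c (2 * r)) fun x hx => by
    simp [corr, cutf_zero hr hx]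

theorem corr_sl (v : (Fin n → ℝ) → ℝ) (hv : ContDiff ℝ 1 v)
    (a : ℝ) (c : Fin n → ℝ) {r : ℝ} (hr : 0 < r) (x : Fin n → ℝ) :
    Sl (corr v a c r) x (corrG v a c r x) := by
  intro ε hε
  by_cases hx : x ∈ closedBall c (2 * r)
  · have h := sl_of_differentiable (hv.differentiable (by simp) (foldn c r x)) ε hε
    have h' := (foldn_cont c r).continuousAt (x := x) |>.eventually h
    filter_upwards [h'] with y hy
    rw [corrG, indicator_of_mem hx]
    refine (corr_diff v a c hr x y).trans ?_
    have := foldn_lip c r y x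
    calc _ ≤ (‖fderiv ℝ v (foldn c r x)‖ + ε) * ‖foldn c r y - foldn c r x‖
          + r⁻¹ * |a - v (foldn c r x)| * ‖y - x‖ := by gcongr
      _ ≤ (‖fderiv ℝ v (foldn c r x)‖ + ε) * ‖y - x‖
          + r⁻¹ * |a - v (foldn c r x)| * ‖y - x‖ := by gcongr
      _ = _ := by ring
  · filter_upwards [isClosed_closedBall.isOpen_compl.mem_nhds hx] with y hy
    rw [corrG, indicator_of_notMem hx]
    simp only [corr, cutf_zero hr hx, cutf_zero hr hy]
    simp; positivity

theorem corr_energy (v : (Fin n → ℝ) → ℝ) (hv : ContDiff ℝ 1 v)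
    (c : Fin n → ℝ) {r : ℝ} (hr : 0 < r) {p : ℝ} (hp : 1 ≤ p) :
    ∫⁻ x, ENNReal.ofReal (corrG v (⨍ y in closedBall c r, v y) c r x) ^ p ≤
      3 ^ n * (2 ^ (p - 1) * (1 + 2 ^ n * 2 ^ p)) * ∫⁻ x in closedBall c r, ‖fderiv ℝ v x‖ₑ ^ p := by
  have hp0 : 0 < p := by linarith
  set a := ⨍ y in closedBall c r, v y with ha
  set K : (Fin n → ℝ) → ℝ≥0∞ := fun z => 2 ^ (p - 1) * (‖fderiv ℝ v z‖ₑ ^ p +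
    ENNReal.ofReal r⁻¹ ^ p * ‖a - v z‖ₑ ^ p) with hKdef
  have hm1 : Measurable fun z => ‖fderiv ℝ v z‖ₑ ^ p := (measurable_fderiv ℝ v).enorm.pow_const p
  have hm2 : Measurable fun z => ‖a - v z‖ₑ ^ p :=
    (measurable_const.sub hv.continuous.measurable).enorm.pow_const p
  have hK : Measurable K := (hm1.add (hm2.const_mul _)).const_mul _
  calc _ ≤ ∫⁻ x, (closedBall c (2 * r)).indicator (fun x => K (foldn c r x)) x := by
        refine lintegral_mono fun x => ?_
        beta_reduce
        rw [corrG]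
        by_cases hx : x ∈ closedBall c (2 * r)
        · rw [indicator_of_mem hx, indicator_of_mem hx, ENNReal.ofReal_add (by positivity) (by positivity),
            ENNReal.ofReal_mul (by positivity), ← Real.norm_eq_abs, ofReal_norm, ofReal_norm]
          refine (ENNReal.rpow_add_le_mul_rpow_add_rpow _ _ hp).trans (le_of_eq ?_)
          rw [ENNReal.mul_rpow_of_nonneg _ _ hp0.le]
        · rw [indicator_of_notMem hx, indicator_of_notMem hx]; simp [hp0]
    _ = ∫⁻ x in closedBall c (2 * r), K (foldn c r x) := lintegral_indicator measurableSet_closedBall _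
    _ ≤ 3 ^ n * ∫⁻ x in closedBall c r, K x := foldn_lintegral c hr.le K hK
    _ ≤ 3 ^ n * (2 ^ (p - 1) * ((∫⁻ x in closedBall c r, ‖fderiv ℝ v x‖ₑ ^ p) +
          ENNReal.ofReal r⁻¹ ^ p * (2 ^ n * ENNReal.ofReal (2 * r) ^ p *
        ∫⁻ x in closedBall c r, ‖fderiv ℝ v x‖ₑ ^ p))) := by
        refine mul_le_mul' le_rfl ?_
        have hm3 : Measurable fun z => ‖fderiv ℝ v z‖ₑ ^ p + ENNReal.ofReal r⁻¹ ^ p * ‖a - v z‖ₑ ^ p :=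
          hm1.add (hm2.const_mul _)
        rw [hKdef, lintegral_const_mul _ hm3, lintegral_add_left hm1,
          lintegral_const_mul _ hm2]
        refine mul_le_mul' le_rfl (add_le_add le_rfl (mul_le_mul' le_rfl ?_))
        have := poincare (volume : Measure (Fin n → ℝ)) c hr v hv hp
        rwa [Module.finrank_fin_fun] at this
    _ = _ := by
        have : ENNReal.ofReal r⁻¹ ^ p * ENNReal.ofReal (2 * r) ^ p = 2 ^ p := by
          rw [← ENNReal.mul_rpow_of_nonneg _ _ hp0.le, ← ENNReal.ofReal_mul (by positivity)]
          congr 1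
          rw [show r⁻¹ * (2 * r) = 2 by field_simp]; simp
        generalize ∫⁻ x in closedBall c r, ‖fderiv ℝ v x‖ₑ ^ p = I at *
        calc _ = 3 ^ n * (2 ^ (p - 1) * (I + 2 ^ n * (ENNReal.ofReal r⁻¹ ^ p * ENNReal.ofReal (2 * r) ^ p) * I)) := by ring
          _ = _ := by rw [this]; ring

end


section
variable {n : ℕ}

theorem radius_bound (hn : 1 ≤ n) (v : (Fin n → ℝ) → ℝ) (hv : Continuous v) (hvc : HasCompactSupport v)
    {t : ℝ} (ht : 0 < t) : ∃ R, ∀ x r, 0 < r → t < (⨍ y in closedBall x r, v y) → r ≤ R := by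
  have hint : Integrable v := hv.integrable_of_hasCompactSupport hvc
  refine ⟨1 / 2 + (∫ y, ‖v y‖) / t, fun x r hr h => ?_⟩
  have hI0 : 0 ≤ ∫ y, ‖v y‖ := integral_nonneg fun _ => norm_nonneg _
  rw [setAverage_eq, smul_eq_mul] at h
  have hvol : volume.real (closedBall x r) = (2 * r) ^ n := by
    rw [Measure.real, Real.volume_pi_closedBall _ hr.le]
    rw [ENNReal.toReal_ofReal (by positivity)]; simp
  rw [hvol] at h
  have h1 : ∫ y in closedBall x r, v y ≤ ∫ y, ‖v y‖ :=
    (setIntegral_mono hint.integrableOn hint.norm.integrableOn fun y => Real.le_norm_self _).trans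
      (setIntegral_le_integral hint.norm (Eventually.of_forall fun _ => norm_nonneg _))
  have h2 : (2 * r) ^ n * t < ∫ y, ‖v y‖ := by
    rw [lt_inv_mul_iff₀ (by positivity)] at h
    exact h.trans_le h1
  rcases le_total r (1 / 2) with h3 | h3
  · have : 0 ≤ (∫ y, ‖v y‖) / t := by positivity
    linarith
  · have h4 : 2 * r ≤ (2 * r) ^ n := le_self_pow₀ (by linarith) (by omega)
    have h5 : 2 * r ≤ (∫ y, ‖v y‖) / t := by
      rw [le_div_iff₀ ht]; exact (mul_le_mul_of_nonneg_right h4 ht.le).trans h2.le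
    linarith

theorem lemmaA (hn : 1 ≤ n) {p : ℝ} (hp : 1 ≤ p) : ∃ C : ℝ≥0∞, C ≠ ∞ ∧
    ∀ v : (Fin n → ℝ) → ℝ, ContDiff ℝ 1 v → HasCompactSupport v → ∀ t : ℝ, 0 < t →
    ∀ F : Set (Fin n → ℝ), IsCompact F → (∀ x ∈ F, ∃ r > 0, t < ⨍ y in closedBall x r, v y) →
    ∃ w : (Fin n → ℝ) → ℝ, (∃ L, LipschitzWith L w) ∧ HasCompactSupport w ∧ (∀ x ∈ F, t ≤ w x) ∧
      ∫⁻ x, ‖fderiv ℝ w x‖ₑ ^ p ≤ C * ∫⁻ x, ‖fderiv ℝ v x‖ₑ ^ p := by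
  classical
  have hp0 : 0 < p := by linarith
  obtain ⟨N, τ, hτ, hN⟩ := HasBesicovitchCovering.no_satelliteConfig (α := Fin n → ℝ)
  obtain ⟨C0, hC0⟩ : ∃ C0 : ℝ≥0∞, C0 = 3 ^ n * (2 ^ (p - 1) * (1 + 2 ^ n * 2 ^ p)) := ⟨_, rfl⟩
  have h2p : ∀ q : ℝ, (2 : ℝ≥0∞) ^ q ≠ ∞ := fun q => by simp
  have hC0t : C0 ≠ ∞ := by
    rw [hC0]
    exact ENNReal.mul_ne_top (by simp) (ENNReal.mul_ne_top (h2p _)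
      (ENNReal.add_ne_top.2 ⟨by simp, ENNReal.mul_ne_top (by simp) (h2p _)⟩))
  refine ⟨2 ^ (p - 1) * (1 + N * C0), ENNReal.mul_ne_top (h2p _) (ENNReal.add_ne_top.2 ⟨by simp,
    ENNReal.mul_ne_top (by simp) hC0t⟩), fun v hv hvc t ht F hF hr => ?_⟩
  choose! r hr0 hrt using hr
  obtain ⟨R, hR⟩ := radius_bound hn v hv.continuous hvc ht
  let q : Besicovitch.BallPackage F (Fin n → ℝ) :=
    { c := fun x => x, r := fun x => r x, rpos := fun x => hr0 x x.2, r_bound := R,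
      r_le := fun x => hR x (r x) (hr0 x x.2) (hrt x x.2) }
  obtain ⟨s, hsd, hsc⟩ := Besicovitch.exist_disjoint_covering_families hτ hN q
  obtain ⟨T', hT's, hT'f, hT'c⟩ := hF.elim_finite_subcover_image (b := ⋃ i, s i)
    (c := fun j : F => ball (j : Fin n → ℝ) (r j)) (fun _ _ => isOpen_ball) (by
      intro x hx
      have := hsc ⟨⟨x, hx⟩, rfl⟩
      simp only [mem_iUnion] at this ⊢
      obtain ⟨i, j, hj, hxj⟩ := this
      exact ⟨j, ⟨i, hj⟩, hxj⟩)
  obtain ⟨T, rfl⟩ := hT'f.exists_finset_coe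
  obtain ⟨a, ha⟩ : ∃ a : F → ℝ, ∀ j, a j = ⨍ y in closedBall (j : Fin n → ℝ) (r j), v y := ⟨_, fun _ => rfl⟩
  obtain ⟨m, ⟨L, hL⟩, hc, h0, hle, H, hH0, hsl, hH⟩ := finite_max T (fun j => corr v (a j) j (r j))
    (fun j => corrG v (a j) j (r j)) hp0 (fun j _ => corr_lip v hv hvc _ _ (hr0 j j.2))
    (fun j _ => corr_cs v _ _ (hr0 j j.2)) (fun j _ x => corr_sl v hv _ _ (hr0 j j.2) x)
  obtain ⟨L', hL'⟩ := hv.lipschitzWith_of_hasCompactSupport hvc (by simp)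
  refine ⟨fun x => v x + m x, ⟨_, hL'.add hL⟩, hvc.add hc, fun x hx => ?_, ?_⟩
  · have := hT'c hx
    simp only [mem_iUnion] at this
    obtain ⟨j, hj, hxj⟩ := this
    have hxj' := ball_subset_closedBall hxj
    have h1 := hle j hj x
    simp only [corr, cutf_one (hr0 j j.2) hxj', foldn_id hxj', one_mul] at h1
    have h2 := hrt j j.2
    rw [← ha] at h2
    linarith
  · have hsum : ∑ j ∈ T, ∫⁻ x in closedBall (j : Fin n → ℝ) (r j), ‖fderiv ℝ v x‖ₑ ^ p ≤
        N * ∫⁻ x, ‖fderiv ℝ v x‖ₑ ^ p := by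
      calc _ ≤ ∑ j ∈ T, ∑ i : Fin N, if j ∈ s i then
              ∫⁻ x in closedBall (j : Fin n → ℝ) (r j), ‖fderiv ℝ v x‖ₑ ^ p else 0 := by
            refine Finset.sum_le_sum fun j hj => ?_
            obtain ⟨i, hi⟩ := mem_iUnion.1 (hT's hj)
            refine le_trans (le_of_eq (if_pos hi).symm) (Finset.single_le_sum (f := fun i => if j ∈ s i then
              ∫⁻ x in closedBall (j : Fin n → ℝ) (r j), ‖fderiv ℝ v x‖ₑ ^ p else 0)
              (fun _ _ => zero_le) (Finset.mem_univ i))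
        _ = ∑ i : Fin N, ∑ j ∈ T.filter (· ∈ s i),
              ∫⁻ x in closedBall (j : Fin n → ℝ) (r j), ‖fderiv ℝ v x‖ₑ ^ p := by
            rw [Finset.sum_comm]
            simp_rw [Finset.sum_filter]
        _ ≤ ∑ i : Fin N, ∫⁻ x, ‖fderiv ℝ v x‖ₑ ^ p := by
            refine Finset.sum_le_sum fun i _ => ?_
            rw [← lintegral_biUnion_finset (fun j hj k hk hjk => ?_) (fun _ _ => measurableSet_closedBall)]
            · exact setLIntegral_le_lintegral _ _
            · exact hsd i (Finset.mem_filter.1 hj).2 (Finset.mem_filter.1 hk).2 hjk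
        _ = _ := by simp
    have hm1 : Measurable fun z => ‖fderiv ℝ v z‖ₑ ^ p := (measurable_fderiv ℝ v).enorm.pow_const p
    calc _ ≤ ∫⁻ x, 2 ^ (p - 1) * (‖fderiv ℝ v x‖ₑ ^ p +
            ∑ j ∈ T, ENNReal.ofReal (corrG v (a j) j (r j) x) ^ p) := by
          refine lintegral_mono fun x => ?_
          have h1 := ((sl_of_differentiable (hv.differentiable (by simp) x)).add (hsl x)).norm_fderiv_le
            (add_nonneg (norm_nonneg _) (hH0 x))
          have h2 : ‖fderiv ℝ (fun x => v x + m x) x‖ₑ ≤ ‖fderiv ℝ v x‖ₑ + ENNReal.ofReal (H x) := by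
            rw [← ofReal_norm, ← ofReal_norm, ← ENNReal.ofReal_add (norm_nonneg _) (hH0 x)]
            exact ENNReal.ofReal_le_ofReal h1
          refine (ENNReal.rpow_le_rpow h2 hp0.le).trans
            ((ENNReal.rpow_add_le_mul_rpow_add_rpow _ _ hp).trans ?_)
          exact mul_le_mul' le_rfl (add_le_add le_rfl (hH x))
      _ = 2 ^ (p - 1) * ((∫⁻ x, ‖fderiv ℝ v x‖ₑ ^ p) +
            ∑ j ∈ T, ∫⁻ x, ENNReal.ofReal (corrG v (a j) j (r j) x) ^ p) := by
          rw [lintegral_const_mul' _ _ (h2p _), lintegral_add_left hm1, lintegral_finsetSum]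
          intro j _
          refine Measurable.pow_const (Measurable.ennreal_ofReal ?_) p
          unfold corrG
          refine Measurable.indicator ?_ measurableSet_closedBall
          have hf := (foldn_cont (j : Fin n → ℝ) (r j)).measurable
          have hvm := hv.continuous.measurable
          have g1 : Measurable fun x => fderiv ℝ v (foldn (j : Fin n → ℝ) (r j) x) := (measurable_fderiv ℝ v).comp hf
          have g2 : Measurable fun x => v (foldn (j : Fin n → ℝ) (r j) x) := hvm.comp hf
          have g3 : Measurable fun x => |a j - v (foldn (j : Fin n → ℝ) (r j) x)| :=
            (measurable_const.sub g2).norm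
          exact g1.norm.add (g3.const_mul _)
      _ ≤ 2 ^ (p - 1) * ((∫⁻ x, ‖fderiv ℝ v x‖ₑ ^ p) +
            ∑ j ∈ T, C0 * ∫⁻ x in closedBall (j : Fin n → ℝ) (r j), ‖fderiv ℝ v x‖ₑ ^ p) := by
          refine mul_le_mul' le_rfl (add_le_add le_rfl (Finset.sum_le_sum fun j _ => ?_))
          rw [ha, hC0]
          exact corr_energy v hv j (hr0 j j.2) hp
      _ ≤ 2 ^ (p - 1) * ((∫⁻ x, ‖fderiv ℝ v x‖ₑ ^ p) + C0 * (N * ∫⁻ x, ‖fderiv ℝ v x‖ₑ ^ p)) := by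
          rw [← Finset.mul_sum]
          exact mul_le_mul' le_rfl (add_le_add le_rfl (mul_le_mul' le_rfl hsum))
      _ = _ := by ring

end


section
variable {n : ℕ}

theorem avg_open (v : (Fin n → ℝ) → ℝ) (hv : Continuous v) (t : ℝ) :
    IsOpen {x | ∃ r > 0, t < ⨍ y in closedBall x r, v y} := by
  have : {x | ∃ r > 0, t < ⨍ y in closedBall x r, v y} =
      ⋃ r > 0, {x | t < ⨍ y in closedBall x r, v y} := by ext; simp
  rw [this]
  refine isOpen_biUnion fun r hr => ?_
  have hr : 0 < r := hr
  have h1 : ∀ x : Fin n → ℝ, ⨍ y in closedBall x r, v y =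
      ((2 * r) ^ n)⁻¹ * ∫ y in closedBall 0 r, v (x + y) := by
    intro x
    have hvol : volume.real (closedBall x r) = (2 * r) ^ n := by
      rw [Measure.real, Real.volume_pi_closedBall _ hr.le]
      rw [ENNReal.toReal_ofReal (by positivity)]; simp
    rw [setAverage_eq, smul_eq_mul, hvol]
    congr 1
    have h2 := (measurePreserving_add_left (volume : Measure (Fin n → ℝ)) x).setIntegral_preimage_emb
      (measurableEmbedding_addLeft x) v (closedBall x r)
    rw [← h2]
    congr 2
    ext y; simp
  simp_rw [h1]
  refine isOpen_lt continuous_const (continuous_const.mul ?_)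
  exact continuous_parametric_integral_of_continuous (f := fun x y => v (x + y))
    (hv.comp (continuous_fst.add continuous_snd)) (isCompact_closedBall 0 r)

theorem sabs_deriv (s : ℝ) : HasDerivAt (fun s : ℝ => √(s ^ 2 + 1) - 1) (s / √(s ^ 2 + 1)) s := by
  have h0 : s ^ 2 + 1 ≠ 0 := by positivity
  have h := (((hasDerivAt_id s).pow 2).add_const 1).sqrt h0 |>.sub_const 1
  have e : s / √(s ^ 2 + 1) = ((2:ℕ):ℝ) * id s ^ (2 - 1) * 1 / (2 * √((id ^ 2) s + 1)) := by
    simp only [Pi.pow_apply, id]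
    have : √(s ^ 2 + 1) ≠ 0 := (Real.sqrt_pos.2 (by positivity)).ne'
    field_simp
    simp [mul_comm]
  rw [e]
  exact h

theorem weakType1 (hn : 1 ≤ n) {p : ℝ} (hp : 1 ≤ p) : ∃ C : ℝ≥0∞, C ≠ ∞ ∧ ∃ B : ℝ, 0 ≤ B ∧
    ∀ u : En n → ℝ, ContDiff ℝ 1 u → HasCompactSupport u →
    ∃ U, IsOpen U ∧ capOpen p U ≤ C * ∫⁻ x, ‖fderiv ℝ u x‖ₑ ^ p ∧
      ∀ x ∉ U, ∀ r > 0, ∫⁻ y in ball x r, ‖u y‖ₑ ≤ ENNReal.ofReal B * volume (ball x r) := by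
  have hp0 : 0 ≤ p := by linarith
  obtain ⟨C, hC, hA⟩ := lemmaA hn hp
  obtain ⟨e, he⟩ : ∃ e : En n ≃L[ℝ] (Fin n → ℝ), ⇑e = WithLp.ofLp := ⟨EuclideanSpace.equiv (Fin n) ℝ, rfl⟩
  have hmp : MeasurePreserving e := he ▸ PiLp.volume_preserving_ofLp (Fin n)
  have hemb : MeasurableEmbedding e := e.toHomeomorph.measurableEmbedding
  have hV0 : volume (ball (0 : En n) 1) ≠ 0 := (measure_ball_pos _ _ one_pos).ne'
  have hV1 : volume (ball (0 : En n) 1) ≠ ∞ := measure_ball_lt_top.ne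
  refine ⟨2 ^ p * (‖(e : En n →L[ℝ] (Fin n → ℝ))‖ₑ ^ p * (C * ‖(e.symm : (Fin n → ℝ) →L[ℝ] En n)‖ₑ ^ p)),
    ?_, (2 * 2 ^ n / volume (ball (0 : En n) 1)).toReal, ENNReal.toReal_nonneg, fun u hu huc => ?_⟩
  · have h1 : ∀ x : ℝ≥0∞, x ≠ ∞ → x ^ p ≠ ∞ := fun x hx => ENNReal.rpow_ne_top_of_nonneg hp0 hx
    exact ENNReal.mul_ne_top (h1 _ (by simp)) (ENNReal.mul_ne_top (h1 _ enorm_ne_top)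
      (ENNReal.mul_ne_top hC (h1 _ enorm_ne_top)))
  have hBt : 2 * 2 ^ n / volume (ball (0 : En n) 1) ≠ ∞ :=
    ENNReal.div_ne_top (ENNReal.mul_ne_top (by simp) (by simp)) hV0
  rw [ENNReal.ofReal_toReal hBt]
  obtain ⟨v, hvdef⟩ : ∃ v : (Fin n → ℝ) → ℝ, v = fun y => √(u (e.symm y) ^ 2 + 1) - 1 := ⟨_, rfl⟩
  have hue : ContDiff ℝ 1 (fun y => u (e.symm y)) := hu.comp e.symm.contDiff
  have hv : ContDiff ℝ 1 v := by
    rw [hvdef]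
    exact (((hue.pow 2).add contDiff_const).sqrt (fun x => by positivity)).sub contDiff_const
  have hvc : HasCompactSupport v := by
    rw [hvdef]
    exact (huc.comp_homeomorph e.symm.toHomeomorph).comp_left (g := fun s : ℝ => √(s ^ 2 + 1) - 1) (by simp)
  have hDv : ∀ y, ‖fderiv ℝ v y‖ₑ ≤ ‖fderiv ℝ u (e.symm y)‖ₑ * ‖(e.symm : (Fin n → ℝ) →L[ℝ] En n)‖ₑ := by
    intro y
    have h1 : HasFDerivAt (fun y => u (e.symm y)) (fderiv ℝ (u ∘ e.symm) y) y :=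
      (hue.differentiable (by simp) y).hasFDerivAt
    have h2 := (sabs_deriv (u (e.symm y))).comp_hasFDerivAt y h1
    have h3 : fderiv ℝ v y = (u (e.symm y) / √(u (e.symm y) ^ 2 + 1)) • fderiv ℝ (u ∘ e.symm) y := by
      rw [hvdef]; exact h2.fderiv
    have h4 : ‖u (e.symm y) / √(u (e.symm y) ^ 2 + 1)‖ ≤ 1 := by
      rw [norm_div, Real.norm_eq_abs, Real.norm_of_nonneg (Real.sqrt_nonneg _)]
      refine div_le_one_of_le₀ (Real.abs_le_sqrt (by linarith)) (Real.sqrt_nonneg _)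
    rw [h3, ContinuousLinearEquiv.comp_right_fderiv]
    rw [← ofReal_norm, ← ofReal_norm, ← ofReal_norm, ← ENNReal.ofReal_mul (norm_nonneg _)]
    refine ENNReal.ofReal_le_ofReal ?_
    rw [norm_smul]
    exact (mul_le_of_le_one_left (norm_nonneg _) h4).trans (ContinuousLinearMap.opNorm_comp_le _ _)
  refine ⟨e ⁻¹' {x | ∃ r > 0, 1 < ⨍ y in closedBall x r, v y}, (avg_open v hv.continuous 1).preimage e.continuous,
    iSup₂_le fun F ⟨hFU, hFc⟩ => ?_, fun x hx r hr => ?_⟩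
  · obtain ⟨w, ⟨L, hL⟩, hwc, hw1, hwe⟩ := hA v hv hvc 1 one_pos (e '' F) (hFc.image e.continuous) (by
      rintro _ ⟨x, hx, rfl⟩; exact hFU hx)
    refine (capK_le hp F (w ∘ e) (hL.comp e.lipschitz) (hwc.comp_homeomorph e.toHomeomorph)
      fun x hx => hw1 _ ⟨x, hx, rfl⟩).trans ?_
    rw [mul_assoc]
    refine mul_le_mul' le_rfl ?_
    rw [mul_assoc, mul_assoc]
    calc _ ≤ ∫⁻ x, ‖(e : En n →L[ℝ] (Fin n → ℝ))‖ₑ ^ p * ‖fderiv ℝ w (e x)‖ₑ ^ p := by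
          refine lintegral_mono fun x => ?_
          beta_reduce
          rw [← ENNReal.mul_rpow_of_nonneg _ _ hp0, ContinuousLinearEquiv.comp_right_fderiv]
          refine ENNReal.rpow_le_rpow ?_ hp0
          rw [← ofReal_norm, ← ofReal_norm, ← ofReal_norm, ← ENNReal.ofReal_mul (norm_nonneg _), mul_comm]
          exact ENNReal.ofReal_le_ofReal (ContinuousLinearMap.opNorm_comp_le _ _)
      _ = ‖(e : En n →L[ℝ] (Fin n → ℝ))‖ₑ ^ p * ∫⁻ x, ‖fderiv ℝ w x‖ₑ ^ p := by
          rw [lintegral_const_mul' _ _ (ENNReal.rpow_ne_top_of_nonneg hp0 enorm_ne_top)]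
          congr 1
          exact hmp.lintegral_comp_emb hemb (fun x => ‖fderiv ℝ w x‖ₑ ^ p)
      _ ≤ ‖(e : En n →L[ℝ] (Fin n → ℝ))‖ₑ ^ p * (C * ∫⁻ x, ‖fderiv ℝ v x‖ₑ ^ p) := mul_le_mul' le_rfl hwe
      _ ≤ _ := by
          refine mul_le_mul' le_rfl (mul_le_mul' le_rfl ?_)
          rw [← hmp.lintegral_comp_emb hemb (fun x => ‖fderiv ℝ v x‖ₑ ^ p),
            ← lintegral_const_mul' _ _ (ENNReal.rpow_ne_top_of_nonneg hp0 enorm_ne_top)]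
          refine lintegral_mono fun x => ?_
          beta_reduce
          rw [← ENNReal.mul_rpow_of_nonneg _ _ hp0, mul_comm]
          refine ENNReal.rpow_le_rpow ?_ hp0
          have := hDv (e x)
          rwa [e.symm_apply_apply] at this
  · have havg : ⨍ y in closedBall (e x) r, v y ≤ 1 := by
      by_contra! h
      exact hx ⟨r, hr, h⟩
    have hvol : volume (closedBall (e x) r) = ENNReal.ofReal (2 * r) ^ n := by
      rw [Real.volume_pi_closedBall _ hr.le, ENNReal.ofReal_pow (by positivity)]; simp
    have hvol' : volume.real (closedBall (e x) r) = (2 * r) ^ n := by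
      rw [Measure.real, hvol, ← ENNReal.ofReal_pow (by positivity), ENNReal.toReal_ofReal (by positivity)]
    have hv0 : ∀ y, 0 ≤ v y := fun y => by
      rw [hvdef]; simp only [sub_nonneg]; rw [Real.one_le_sqrt]; nlinarith [sq_nonneg (u (e.symm y))]
    have hint : ∫⁻ y in closedBall (e x) r, ENNReal.ofReal (v y) ≤ ENNReal.ofReal (2 * r) ^ n := by
      rw [← ofReal_integral_eq_lintegral_ofReal (hv.continuous.integrable_of_hasCompactSupport hvc).integrableOn
        (Eventually.of_forall hv0), ← ENNReal.ofReal_pow (by positivity)]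
      refine ENNReal.ofReal_le_ofReal ?_
      rw [setAverage_eq, smul_eq_mul, hvol', inv_mul_le_iff₀ (by positivity), mul_one] at havg
      exact havg
    have hsub : ball x r ⊆ e ⁻¹' closedBall (e x) r := by
      intro y hy
      rw [mem_ball, dist_eq_norm] at hy
      rw [mem_preimage, mem_closedBall, dist_eq_norm, ← map_sub]
      refine (pi_norm_le_iff_of_nonneg hr.le).2 fun i => ?_
      have h1 : e (y - x) i = (y - x) i := by rw [he]
      rw [h1]
      exact (PiLp.norm_apply_le (y - x) i).trans hy.le
    calc _ ≤ ∫⁻ y in e ⁻¹' closedBall (e x) r, ‖u y‖ₑ := lintegral_mono_set hsub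
      _ ≤ ∫⁻ y in e ⁻¹' closedBall (e x) r, (ENNReal.ofReal (v (e y)) + 1) := by
          refine lintegral_mono fun y => ?_
          beta_reduce
          rw [hvdef, ← ofReal_norm, ← ENNReal.ofReal_one, ← ENNReal.ofReal_add (by rw [← hvdef]; exact hv0 _) zero_le_one]
          refine ENNReal.ofReal_le_ofReal ?_
          simp only [e.symm_apply_apply, sub_add_cancel]
          exact Real.abs_le_sqrt (by linarith)
      _ = ∫⁻ y in closedBall (e x) r, (ENNReal.ofReal (v y) + 1) :=
          hmp.setLIntegral_comp_preimage_emb hemb (fun y => ENNReal.ofReal (v y) + 1) _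
      _ = (∫⁻ y in closedBall (e x) r, ENNReal.ofReal (v y)) + ENNReal.ofReal (2 * r) ^ n := by
          rw [lintegral_add_right _ measurable_const]
          simp [hvol]
      _ ≤ ENNReal.ofReal (2 * r) ^ n + ENNReal.ofReal (2 * r) ^ n := add_le_add hint le_rfl
      _ = _ := by
          rw [Measure.addHaar_ball_of_pos _ _ hr, finrank_euclideanSpace_fin, ENNReal.ofReal_mul (by norm_num),
            ENNReal.ofReal_pow hr.le]
          rw [mul_comm (ENNReal.ofReal r ^ n), ← mul_assoc, ENNReal.div_mul_cancel hV0 hV1]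
          simp; ring

theorem weakType (hn : 1 ≤ n) {p : ℝ} (hp : 1 ≤ p) : ∃ C : ℝ≥0∞, C ≠ ∞ ∧ ∃ B : ℝ, 0 ≤ B ∧
    ∀ u : En n → ℝ, ContDiff ℝ 1 u → HasCompactSupport u → ∀ t : ℝ, 0 < t →
    ∃ U, IsOpen U ∧ capOpen p U ≤ C * (ENNReal.ofReal t⁻¹ ^ p * ∫⁻ x, ‖fderiv ℝ u x‖ₑ ^ p) ∧
      ∀ x ∉ U, ∀ r > 0, ∫⁻ y in ball x r, ‖u y‖ₑ ≤ ENNReal.ofReal (B * t) * volume (ball x r) := by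
  have hp0 : 0 ≤ p := by linarith
  obtain ⟨C, hC, B, hB, H⟩ := weakType1 hn hp
  refine ⟨C, hC, B, hB, fun u hu huc t ht => ?_⟩
  obtain ⟨U, hU, hcap, hav⟩ := H (fun x => t⁻¹ * u x) (contDiff_const.mul hu) huc.mul_left
  refine ⟨U, hU, hcap.trans (mul_le_mul' le_rfl ?_), fun x hx r hr => ?_⟩
  · rw [← lintegral_const_mul' _ _ (ENNReal.rpow_ne_top_of_nonneg hp0 ENNReal.ofReal_ne_top)]
    refine lintegral_mono fun x => ?_
    beta_reduce
    rw [fderiv_const_mul (hu.differentiable (by simp) x), enorm_smul, Real.enorm_eq_ofReal (by positivity),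
      ENNReal.mul_rpow_of_nonneg _ _ hp0]
  · have h1 := hav x hx r hr
    simp_rw [enorm_mul] at h1
    rw [lintegral_const_mul' _ _ enorm_ne_top, Real.enorm_eq_ofReal (by positivity)] at h1
    have h2 := mul_le_mul' (le_refl (ENNReal.ofReal t)) h1
    rw [← mul_assoc, ← mul_assoc, ← ENNReal.ofReal_mul ht.le, ← ENNReal.ofReal_mul ht.le,
      mul_inv_cancel₀ ht.ne', ENNReal.ofReal_one, one_mul, mul_comm t] at h2
    exact h2

end


section
variable {n : ℕ}

/-- mollification -/
noncomputable def Mo (φ : ContDiffBump (0 : En n)) (k : En n → ℝ) : En n → ℝ :=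
  convolution (φ.normed volume) k (ContinuousLinearMap.lsmul ℝ ℝ) volume

theorem Mo_contDiff (φ : ContDiffBump (0 : En n)) {k : En n → ℝ} (hk : LocallyIntegrable k) :
    ContDiff ℝ (⊤ : ℕ∞) (Mo φ k) := moll_contDiff volume φ k hk

theorem energy_eq {E' F' : Type*} [MeasurableSpace E'] [NormedAddCommGroup F'] (μ : Measure E') {p : ℝ} (hp : 1 ≤ p)
    (w : E' → F') : ∫⁻ x, ‖w x‖ₑ ^ p ∂μ = eLpNorm w (ENNReal.ofReal p) μ ^ p := by
  have hp0 : 0 < p := by linarith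
  rw [eLpNorm_eq_lintegral_rpow_enorm_toReal (by simpa using hp0) ENNReal.ofReal_ne_top,
    ENNReal.toReal_ofReal hp0.le, ← ENNReal.rpow_mul, one_div, inv_mul_cancel₀ hp0.ne', ENNReal.rpow_one]

theorem Mo_young (φ : ContDiffBump (0 : En n)) {k : En n → ℝ} (hk : Measurable k) {p : ℝ} (hp : 1 ≤ p) :
    eLpNorm (Mo φ k) (ENNReal.ofReal p) volume ≤ eLpNorm k (ENNReal.ofReal p) volume := by
  have hp0 : 0 < p := by linarith
  have h : ∫⁻ x, ‖Mo φ k x‖ₑ ^ p ≤ ∫⁻ x, ‖k x‖ₑ ^ p := by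
    refine le_trans (lintegral_mono fun x => ?_)
      (young volume (fun t => ‖φ.normed volume t‖ₑ) (fun x => ‖k x‖ₑ)
        φ.continuous_normed.measurable.enorm hk.enorm (bump_lintegral volume φ) hp)
    refine ENNReal.rpow_le_rpow ?_ hp0.le
    unfold Mo
    rw [convolution_def]
    refine (enorm_integral_le_lintegral_enorm _).trans (le_of_eq ?_)
    simp only [ContinuousLinearMap.lsmul_apply, enorm_smul]
  rw [energy_eq _ hp, energy_eq _ hp] at h
  exact (ENNReal.rpow_le_rpow_iff hp0).1 h

theorem Mo_sub (φ : ContDiffBump (0 : En n)) {k g : En n → ℝ} (hk : LocallyIntegrable k)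
    (hg : LocallyIntegrable g) (x : En n) : Mo φ (k - g) x = Mo φ k x - Mo φ g x := by
  have hc : HasCompactSupport (φ.normed volume) := φ.hasCompactSupport_normed
  have e1 : ConvolutionExistsAt (φ.normed volume) k x (ContinuousLinearMap.lsmul ℝ ℝ) volume :=
    hc.convolutionExists_left (ContinuousLinearMap.lsmul ℝ ℝ) φ.continuous_normed hk x
  have e2 : ConvolutionExistsAt (φ.normed volume) g x (ContinuousLinearMap.lsmul ℝ ℝ) volume :=
    hc.convolutionExists_left (ContinuousLinearMap.lsmul ℝ ℝ) φ.continuous_normed hg x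
  unfold Mo
  simp only [convolution_def]
  rw [← integral_sub e1.integrable e2.integrable]
  simp [mul_sub]

theorem Mo_cc_tendsto {g : En n → ℝ} (hg : Continuous g) (hgc : HasCompactSupport g) {p : ℝ} (hp : 1 ≤ p)
    (φ : ℕ → ContDiffBump (0 : En n)) (hφ : Tendsto (fun a => (φ a).rOut) atTop (𝓝 0)) {ε : ℝ≥0∞} (hε : ε ≠ 0) :
    ∀ᶠ a in atTop, eLpNorm (fun x => Mo (φ a) g x - g x) (ENNReal.ofReal p) volume ≤ ε := by
  have hp0 : 0 < p := by linarith
  obtain ⟨S, hS⟩ : ∃ S, S = cthickening 1 (tsupport g) := ⟨_, rfl⟩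
  have hSc : IsCompact S := hS ▸ hgc.isCompact.cthickening
  have hA : volume S ^ (1 / (ENNReal.ofReal p).toReal) ≠ ∞ :=
    ENNReal.rpow_ne_top_of_nonneg (by positivity) hSc.measure_lt_top.ne
  obtain ⟨η, hη0, hη⟩ := ENNReal.exists_nnreal_pos_mul_lt hA hε
  have huc := hgc.uniformContinuous_of_continuous hg
  obtain ⟨δ, hδ, hδg⟩ := Metric.uniformContinuous_iff.1 huc η hη0
  filter_upwards [hφ.eventually (gt_mem_nhds hδ), hφ.eventually (gt_mem_nhds one_pos)] with a h1 h2
  have hb : ∀ x, ‖Mo (φ a) g x - g x‖ ≤ ‖S.indicator (fun _ => (η : ℝ)) x‖ := by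
    intro x
    rw [← dist_eq_norm]
    refine (φ a).dist_normed_convolution_le hg.aestronglyMeasurable fun y hy => ?_
    rw [mem_ball] at hy
    by_cases hx : x ∈ S
    · rw [indicator_of_mem hx, Real.norm_of_nonneg (NNReal.coe_nonneg η)]
      exact (hδg (hy.trans h1)).le
    · rw [indicator_of_notMem hx, norm_zero]
      have hx' : ∀ z, dist z x < 1 → g z = 0 := by
        intro z hz
        by_contra hne
        refine hx (hS ▸ mem_cthickening_of_dist_le x z 1 _ (subset_tsupport _ hne) ?_)
        rw [dist_comm]; exact hz.le
      rw [hx' y (hy.trans h2), hx' x (by simp), dist_self]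
  refine (eLpNorm_mono hb).trans ?_
  rw [eLpNorm_indicator_const hSc.measurableSet (by simpa using hp0) ENNReal.ofReal_ne_top]
  refine le_trans (le_of_eq ?_) hη.le
  simp

theorem Mo_tendsto {k : En n → ℝ} (hk : Measurable k) {p : ℝ} (hp : 1 ≤ p) (hkp : MemLp k (ENNReal.ofReal p) volume)
    (φ : ℕ → ContDiffBump (0 : En n)) (hφ : Tendsto (fun a => (φ a).rOut) atTop (𝓝 0)) :
    Tendsto (fun a => eLpNorm (fun x => Mo (φ a) k x - k x) (ENNReal.ofReal p) volume) atTop (𝓝 0) := by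
  have hP : (1 : ℝ≥0∞) ≤ ENNReal.ofReal p := by rwa [ENNReal.one_le_ofReal]
  rw [ENNReal.tendsto_nhds_zero]
  intro ε hε
  have hε3 : ε / 3 ≠ 0 := (ENNReal.div_pos hε.ne' (by simp)).ne'
  obtain ⟨g, hgc, hgk, hgcont, hgp⟩ := hkp.exists_hasCompactSupport_eLpNorm_sub_le ENNReal.ofReal_ne_top hε3
  have hgm : Measurable g := hgcont.measurable
  have hkl : LocallyIntegrable k := hkp.locallyIntegrable hP
  have hgl : LocallyIntegrable g := hgcont.locallyIntegrable
  filter_upwards [Mo_cc_tendsto hgcont hgc hp φ hφ hε3] with a ha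
  have heq : (fun x => Mo (φ a) k x - k x) =
      (Mo (φ a) (k - g) + fun x => Mo (φ a) g x - g x) - (k - g) := by
    ext x
    simp only [Pi.sub_apply, Pi.add_apply, Mo_sub (φ a) hkl hgl]
    ring
  have m1 : AEStronglyMeasurable (Mo (φ a) (k - g)) volume :=
    (Mo_contDiff (φ a) (hkl.sub hgl)).continuous.aestronglyMeasurable
  have m2 : AEStronglyMeasurable (fun x => Mo (φ a) g x - g x) volume :=
    ((Mo_contDiff (φ a) hgl).continuous.sub hgcont).aestronglyMeasurable
  have m3 : AEStronglyMeasurable (k - g) volume := (hk.sub hgm).aestronglyMeasurable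
  rw [heq]
  calc _ ≤ eLpNorm (Mo (φ a) (k - g)) (ENNReal.ofReal p) volume +
        eLpNorm (fun x => Mo (φ a) g x - g x) (ENNReal.ofReal p) volume +
        eLpNorm (k - g) (ENNReal.ofReal p) volume :=
        (eLpNorm_sub_le (m1.add m2) m3 hP).trans (add_le_add (eLpNorm_add_le m1 m2 hP) le_rfl)
    _ ≤ ε / 3 + ε / 3 + ε / 3 :=
        add_le_add (add_le_add ((Mo_young (φ a) (hk.sub hgm) hp).trans hgk) ha) hgk
    _ = ε := ENNReal.add_thirds ε

theorem Mo_fderiv (φ : ContDiffBump (0 : En n)) {Ω S : Set (En n)} (hSΩ : S ⊆ Ω) {k m : En n → ℝ} {v : En n}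
    (hkm : HasWeakPartialOn Ω k m v) (hk : LocallyIntegrable (S.indicator k))
    {x : En n} (hx : closedBall x φ.rOut ⊆ S) :
    fderiv ℝ (Mo φ (S.indicator k)) x v = Mo φ (S.indicator m) x := by
  have hc : HasCompactSupport (φ.normed volume) := φ.hasCompactSupport_normed
  have hcd : ContDiff ℝ (⊤ : ℕ∞) (φ.normed volume) := φ.contDiff_normed
  have hcd1 : ContDiff ℝ 1 (φ.normed volume) := φ.contDiff_normed
  obtain ⟨L, hL⟩ : ∃ L : ℝ →L[ℝ] ℝ →L[ℝ] ℝ, L = ContinuousLinearMap.lsmul ℝ ℝ := ⟨_, rfl⟩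
  have h1 := hc.hasFDerivAt_convolution_right (μ := volume) L.flip hk hcd1 x
  have h2 : convolution (S.indicator k) (φ.normed volume) L.flip volume = Mo φ (S.indicator k) := by
    unfold Mo; rw [hL]; exact convolution_flip _
  rw [h2] at h1
  rw [h1.fderiv, convolution_precompR_apply L.flip hk (hc.fderiv ℝ) (hcd1.continuous_fderiv one_ne_zero)]
  -- test function
  have hη : IsTest Ω (fun y => φ.normed volume (x - y)) := by
    have hs : tsupport (fun y => φ.normed volume (x - y)) ⊆ closedBall x φ.rOut := by
      refine closure_minimal (fun y hy => ?_) isClosed_closedBall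
      have h3 : x - y ∈ Function.support (φ.normed volume) := hy
      rw [φ.support_normed_eq, mem_ball_zero_iff] at h3
      rw [mem_closedBall, dist_comm, dist_eq_norm]; exact h3.le
    refine ⟨hcd.comp (contDiff_const.sub contDiff_id), ?_, hs.trans (hx.trans hSΩ)⟩
    exact (isCompact_closedBall x φ.rOut).of_isClosed_subset (isClosed_tsupport _) hs
  have hw := hkm _ hη
  have hd : ∀ y, fderiv ℝ (fun y => φ.normed volume (x - y)) y v = - fderiv ℝ (φ.normed volume) (x - y) v := by
    intro y
    have hid : HasFDerivAt (fun y : En n => x - y) (-ContinuousLinearMap.id ℝ (En n)) y :=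
      (hasFDerivAt_id y).const_sub x
    have h3 := (hcd1.differentiable one_ne_zero (x - y)).hasFDerivAt.comp y hid
    have h4 : fderiv ℝ (fun y => φ.normed volume (x - y)) y = _ := h3.fderiv
    rw [h4]; simp
  have hin : ∀ y, y ∉ S → φ.normed volume (x - y) = 0 ∧ fderiv ℝ (φ.normed volume) (x - y) v = 0 := by
    intro y hy
    have h5 : x - y ∉ tsupport (φ.normed volume) := by
      rw [φ.tsupport_normed_eq]
      intro h6
      refine hy (hx ?_)
      rw [mem_closedBall_zero_iff] at h6
      rw [mem_closedBall, dist_comm, dist_eq_norm]; exact h6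
    refine ⟨image_eq_zero_of_notMem_tsupport h5, ?_⟩
    have h7 : x - y ∉ tsupport (fderiv ℝ (φ.normed volume)) := fun h => h5 (tsupport_fderiv_subset ℝ h)
    rw [image_eq_zero_of_notMem_tsupport h7]; simp
  unfold Mo
  rw [convolution_lsmul_swap, convolution_def]
  calc _ = - ∫ y, k y * fderiv ℝ (fun y => φ.normed volume (x - y)) y v := by
        rw [← integral_neg]
        refine integral_congr_ae (Eventually.of_forall fun y => ?_)
        simp only [hL, ContinuousLinearMap.flip_apply, ContinuousLinearMap.lsmul_apply, hd]
        by_cases hy : y ∈ S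
        · rw [indicator_of_mem hy]; simp [mul_comm]
        · rw [(hin y hy).2]; simp
    _ = ∫ y, m y * φ.normed volume (x - y) := by rw [hw]; simp
    _ = _ := by
        refine integral_congr_ae (Eventually.of_forall fun y => ?_)
        by_cases hy : y ∈ S
        · simp only [indicator_of_mem hy]; simp [mul_comm]
        · simp [(hin y hy).1]

end

section
variable {n : ℕ}

theorem Mo_congr (φ : ContDiffBump (0 : En n)) {k k' : En n → ℝ} (h : k =ᵐ[volume] k') : Mo φ k = Mo φ k' := by
  unfold Mo
  exact convolution_congr (ContinuousLinearMap.lsmul ℝ ℝ) (Filter.EventuallyEq.rfl) h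

theorem Mo_tendsto' {k : En n → ℝ} {p : ℝ} (hp : 1 ≤ p) (hkp : MemLp k (ENNReal.ofReal p) volume)
    (φ : ℕ → ContDiffBump (0 : En n)) (hφ : Tendsto (fun a => (φ a).rOut) atTop (𝓝 0)) :
    Tendsto (fun a => eLpNorm (fun x => Mo (φ a) k x - k x) (ENNReal.ofReal p) volume) atTop (𝓝 0) := by
  have he : k =ᵐ[volume] hkp.1.mk k := hkp.1.ae_eq_mk
  have := Mo_tendsto hkp.1.stronglyMeasurable_mk.measurable hp ((memLp_congr_ae he).1 hkp) φ hφ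
  refine this.congr fun a => ?_
  rw [Mo_congr (φ a) he]
  refine eLpNorm_congr_ae ?_
  filter_upwards [he] with x hx
  rw [hx]

theorem cutoff {K : Set (En n)} (hK : IsCompact K) {δ : ℝ} (hδ : 0 < δ) :
    ∃ χ : En n → ℝ, ContDiff ℝ (⊤ : ℕ∞) χ ∧ HasCompactSupport χ ∧ tsupport χ ⊆ cthickening δ K ∧
      ∀ x ∈ K, χ x = 1 := by
  obtain ⟨χ, h1, -, h3, h4⟩ := exists_contMDiff_support_eq_eq_one_iff (n := (⊤ : ℕ∞)) (modelWithCornersSelf ℝ (En n))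
    (isOpen_thickening (δ := δ) (E := K)) hK.isClosed (self_subset_thickening hδ K)
  have hs : tsupport χ ⊆ cthickening δ K := by
    rw [tsupport, h3]; exact closure_thickening_subset_cthickening δ K
  exact ⟨χ, h1.contDiff, HasCompactSupport.of_support_subset_isCompact hK.cthickening
    ((subset_tsupport _).trans hs), hs, fun x hx => (h4 x).1 hx⟩

/-- replacing a possibly non-measurable weak derivative by a measurable one -/
theorem fixh {Ω : Set (En n)} (hΩ : IsOpen Ω) {k m : En n → ℝ} {v : En n}
    (hk : ∀ K, K ⊆ Ω → IsCompact K → IntegrableOn k K) (hkm : HasWeakPartialOn Ω k m v) :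
    ∃ m' : En n → ℝ, HasWeakPartialOn Ω k m' v ∧
      (∀ K, K ⊆ Ω → IsCompact K → AEStronglyMeasurable m' (volume.restrict K)) ∧ ∀ x, |m' x| ≤ |m x| := by
  by_cases H : ∀ η, IsTest Ω η → AEStronglyMeasurable (fun x => m x * η x) volume
  · refine ⟨m, hkm, fun K hK hKc => ?_, fun x => le_rfl⟩
    obtain ⟨δ, hδ, hδΩ⟩ := hKc.exists_cthickening_subset_open hΩ hK
    obtain ⟨η, g1, g2, g3, h2⟩ := cutoff hKc hδ
    have h1 : IsTest Ω η := ⟨g1, g2, g3.trans hδΩ⟩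
    refine ((H η h1).mono_measure Measure.restrict_le_self).congr ?_
    filter_upwards [ae_restrict_mem hKc.measurableSet] with x hx
    rw [h2 x hx, mul_one]
  · push Not at H
    obtain ⟨η₀, h0, hn⟩ := H
    have hz : ∀ η, IsTest Ω η → ¬ AEStronglyMeasurable (fun x => m x * η x) volume →
        ∫ x, k x * fderiv ℝ η x v = 0 := by
      intro η hη hnm
      rw [hkm η hη, integral_undef fun hi => hnm hi.1, neg_zero]
    have hint : ∀ η, IsTest Ω η → Integrable (fun x => k x * fderiv ℝ η x v) := by
      intro η hη
      have hcont : Continuous fun x => fderiv ℝ η x v :=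
        (hη.1.continuous_fderiv (by simp)).clm_apply continuous_const
      have h1 : IntegrableOn (fun x => k x * fderiv ℝ η x v) (tsupport η) :=
        (hk _ hη.2.2 hη.2.1).mul_continuousOn hcont.continuousOn hη.2.1
      refine (integrableOn_iff_integrable_of_support_subset ?_).1 h1
      intro x hx
      refine support_fderiv_subset ℝ (f := η) ?_
      intro h0
      exact hx (by simp [h0])
    refine ⟨0, fun η hη => ?_, fun K _ _ => aestronglyMeasurable_zero, fun x => by simp⟩
    simp only [Pi.zero_apply, zero_mul, integral_zero, neg_zero]
    by_cases hm : AEStronglyMeasurable (fun x => m x * η x) volume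
    · have ht : IsTest Ω (η₀ + η) := ⟨h0.1.add hη.1, h0.2.1.add hη.2.1,
        (tsupport_add _ _).trans (union_subset h0.2.2 hη.2.2)⟩
      have h3 := hz _ ht fun hc => hn <| by
        refine (hc.sub hm).congr (Eventually.of_forall fun x => ?_)
        simp only [Pi.sub_apply, Pi.add_apply]; ring
      have h4 := hz _ h0 hn
      have h5 : ∀ x, k x * fderiv ℝ (η₀ + η) x v = k x * fderiv ℝ η₀ x v + k x * fderiv ℝ η x v := by
        intro x
        rw [fderiv_add (h0.1.differentiable (by simp) x) (hη.1.differentiable (by simp) x)]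
        simp [mul_add]
      simp only [h5] at h3
      rw [integral_add (hint _ h0) (hint _ hη), h4, zero_add] at h3
      exact h3
    · exact hz η hη hm
end


section
variable {n : ℕ}

theorem clm_norm_le_sum (L : En n →L[ℝ] ℝ) : ‖L‖ ≤ ∑ k, |L (EuclideanSpace.single k 1)| := by
  refine L.opNorm_le_bound (Finset.sum_nonneg fun _ _ => abs_nonneg _) fun x => ?_
  have hx : x = ∑ k, x k • (EuclideanSpace.single k (1 : ℝ) : En n) := by
    ext j
    simp [Finset.sum_apply, Pi.single_apply]
  conv_lhs => rw [hx]
  rw [map_sum, Finset.sum_mul]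
  refine (norm_sum_le _ _).trans (Finset.sum_le_sum fun k _ => ?_)
  rw [map_smul, norm_smul, mul_comm]
  exact mul_le_mul_of_nonneg_left (PiLp.norm_apply_le x k) (norm_nonneg _)

noncomputable def TT (G : En n → ℝ) (x : En n) : ℝ :=
  |G x| + ∑ k, |fderiv ℝ G x (EuclideanSpace.single k 1)| +
    ∑ i, ∑ k, |fderiv ℝ (fun y => fderiv ℝ G y (EuclideanSpace.single i 1)) x (EuclideanSpace.single k 1)|

noncomputable def aa (χ : En n → ℝ) (x : En n) : ℝ :=
  |χ x| + ‖fderiv ℝ χ x‖ +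
    ∑ i, ‖fderiv ℝ (fun y => fderiv ℝ χ y (EuclideanSpace.single i 1)) x‖

theorem pd_smooth {G : En n → ℝ} (hG : ContDiff ℝ (⊤ : ℕ∞) G) (v : En n) :
    ContDiff ℝ (⊤ : ℕ∞) fun y => fderiv ℝ G y v :=
  (hG.fderiv_right (m := (⊤ : ℕ∞)) (by simp)).clm_apply contDiff_const

theorem single_norm (i : Fin n) : ‖(EuclideanSpace.single i 1 : En n)‖ = 1 := by simp

theorem prod_bound1 {χ G : En n → ℝ} (hχ : ContDiff ℝ (⊤ : ℕ∞) χ) (hG : ContDiff ℝ (⊤ : ℕ∞) G) (x : En n) :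
    ‖fderiv ℝ (fun y => χ y * G y) x‖ ≤ 2 * aa χ x * TT G x := by
  have hχd := hχ.differentiable (by simp) x
  have hGd := hG.differentiable (by simp) x
  rw [fderiv_fun_mul hχd hGd]
  refine (norm_add_le _ _).trans ?_
  rw [norm_smul, norm_smul, Real.norm_eq_abs, Real.norm_eq_abs]
  have h1 := clm_norm_le_sum (fderiv ℝ G x)
  have h2 : 0 ≤ ∑ i, ‖fderiv ℝ (fun y => fderiv ℝ χ y (EuclideanSpace.single i 1)) x‖ :=
    Finset.sum_nonneg fun _ _ => norm_nonneg _
  have h3 : 0 ≤ ∑ i, ∑ k, |fderiv ℝ (fun y => fderiv ℝ G y (EuclideanSpace.single i 1)) x (EuclideanSpace.single k 1)| :=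
    Finset.sum_nonneg fun _ _ => Finset.sum_nonneg fun _ _ => abs_nonneg _
  have h4 := abs_nonneg (χ x)
  have h5 := abs_nonneg (G x)
  have h6 := norm_nonneg (fderiv ℝ χ x)
  have h7 := norm_nonneg (fderiv ℝ G x)
  have ha : |χ x| ≤ aa χ x := by unfold aa; linarith
  have hb : ‖fderiv ℝ χ x‖ ≤ aa χ x := by unfold aa; linarith
  have hc : |G x| ≤ TT G x := by unfold TT; linarith
  have hd : ‖fderiv ℝ G x‖ ≤ TT G x := by unfold TT; linarith
  have e1 := mul_le_mul ha hd h7 (h4.trans ha)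
  have e2 := mul_le_mul hb hc h5 (h4.trans ha)
  linarith [mul_comm |G x| ‖fderiv ℝ χ x‖]

theorem prod_bound2 {χ G : En n → ℝ} (hχ : ContDiff ℝ (⊤ : ℕ∞) χ) (hG : ContDiff ℝ (⊤ : ℕ∞) G) (i : Fin n) (x : En n) :
    ‖fderiv ℝ (fun z => fderiv ℝ (fun y => χ y * G y) z (EuclideanSpace.single i 1)) x‖ ≤ 4 * aa χ x * TT G x := by
  have hχd := hχ.differentiable (by simp)
  have hGd := hG.differentiable (by simp)
  have hχ2 := pd_smooth hχ (EuclideanSpace.single i 1)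
  have hG2 := pd_smooth hG (EuclideanSpace.single i 1)
  have heq : (fun z => fderiv ℝ (fun y => χ y * G y) z (EuclideanSpace.single i 1)) =
      fun z => χ z * fderiv ℝ G z (EuclideanSpace.single i 1) + G z * fderiv ℝ χ z (EuclideanSpace.single i 1) := by
    ext z
    rw [fderiv_fun_mul (hχd z) (hGd z)]
    simp
  rw [heq]
  obtain ⟨c, hc⟩ : ∃ c : En n → ℝ, c = fun z => fderiv ℝ χ z (EuclideanSpace.single i 1) := ⟨_, rfl⟩
  obtain ⟨b, hb⟩ : ∃ b : En n → ℝ, b = fun z => fderiv ℝ G z (EuclideanSpace.single i 1) := ⟨_, rfl⟩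
  have hcd : Differentiable ℝ c := hc ▸ hχ2.differentiable (by simp)
  have hbd : Differentiable ℝ b := hb ▸ hG2.differentiable (by simp)
  have heq2 : (fun z => χ z * fderiv ℝ G z (EuclideanSpace.single i 1) + G z * fderiv ℝ χ z (EuclideanSpace.single i 1)) =
    fun z => χ z * b z + G z * c z := by rw [hc, hb]
  rw [heq2, fderiv_fun_add ((hχd x).fun_mul (hbd x)) ((hGd x).fun_mul (hcd x)), fderiv_fun_mul (hχd x) (hbd x),
    fderiv_fun_mul (hGd x) (hcd x)]
  have n1 : ‖fderiv ℝ χ x‖ ≤ aa χ x := by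
    have h2 : 0 ≤ ∑ i, ‖fderiv ℝ (fun y => fderiv ℝ χ y (EuclideanSpace.single i 1)) x‖ :=
      Finset.sum_nonneg fun _ _ => norm_nonneg _
    unfold aa; linarith [abs_nonneg (χ x)]
  have n2 : |χ x| ≤ aa χ x := by
    have h2 : 0 ≤ ∑ i, ‖fderiv ℝ (fun y => fderiv ℝ χ y (EuclideanSpace.single i 1)) x‖ :=
      Finset.sum_nonneg fun _ _ => norm_nonneg _
    unfold aa; linarith [norm_nonneg (fderiv ℝ χ x)]
  have n3 : ‖fderiv ℝ c x‖ ≤ aa χ x := by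
    have h2 := Finset.single_le_sum (f := fun i => ‖fderiv ℝ (fun y => fderiv ℝ χ y (EuclideanSpace.single i 1)) x‖)
      (fun _ _ => norm_nonneg _) (Finset.mem_univ i)
    rw [hc]
    unfold aa; linarith [norm_nonneg (fderiv ℝ χ x), abs_nonneg (χ x)]
  have n4 : |c x| ≤ aa χ x := by
    refine le_trans ?_ n1
    rw [hc]
    have := (fderiv ℝ χ x).le_opNorm (EuclideanSpace.single i 1)
    rwa [single_norm, mul_one, Real.norm_eq_abs] at this
  have s1 : 0 ≤ ∑ k, |fderiv ℝ G x (EuclideanSpace.single k 1)| := Finset.sum_nonneg fun _ _ => abs_nonneg _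
  have s2 : 0 ≤ ∑ i, ∑ k, |fderiv ℝ (fun y => fderiv ℝ G y (EuclideanSpace.single i 1)) x (EuclideanSpace.single k 1)| :=
    Finset.sum_nonneg fun _ _ => Finset.sum_nonneg fun _ _ => abs_nonneg _
  have s3 := abs_nonneg (G x)
  have m1 : ‖fderiv ℝ G x‖ ≤ TT G x := by
    have := clm_norm_le_sum (fderiv ℝ G x)
    unfold TT; linarith
  have m2 : |G x| ≤ TT G x := by unfold TT; linarith
  have m3 : ‖fderiv ℝ b x‖ ≤ TT G x := by
    have h1 := clm_norm_le_sum (fderiv ℝ b x)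
    have h2 := Finset.single_le_sum (f := fun i => ∑ k, |fderiv ℝ (fun y => fderiv ℝ G y (EuclideanSpace.single i 1)) x (EuclideanSpace.single k 1)|)
      (fun _ _ => Finset.sum_nonneg fun _ _ => abs_nonneg _) (Finset.mem_univ i)
    simp only [← hb] at h2
    unfold TT; linarith
  have m4 : |b x| ≤ TT G x := by
    refine le_trans ?_ m1
    rw [hb]
    have := (fderiv ℝ G x).le_opNorm (EuclideanSpace.single i 1)
    rwa [single_norm, mul_one, Real.norm_eq_abs] at this
  have a0 : 0 ≤ aa χ x := (abs_nonneg _).trans n2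
  have e1 := mul_le_mul n2 m3 (norm_nonneg _) a0
  have e2 := mul_le_mul n1 m4 (abs_nonneg _) a0
  have e3 := mul_le_mul n3 m2 (abs_nonneg _) a0
  have e4 := mul_le_mul n4 m1 (norm_nonneg _) a0
  refine (norm_add_le _ _).trans ((add_le_add (norm_add_le _ _) (norm_add_le _ _)).trans ?_)
  simp only [norm_smul, Real.norm_eq_abs]
  linarith [mul_comm |b x| ‖fderiv ℝ χ x‖, mul_comm |G x| ‖fderiv ℝ c x‖]

theorem aa_zero {χ : En n → ℝ} {x : En n} (hx : x ∉ tsupport χ) : aa χ x = 0 := by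
  have h0 : χ =ᶠ[𝓝 x] 0 := notMem_tsupport_iff_eventuallyEq.1 hx
  have h1 : ∀ᶠ y in 𝓝 x, fderiv ℝ χ y = 0 := by
    filter_upwards [h0.eventuallyEq_nhds] with y hy
    rw [hy.fderiv_eq]; simp
  have h2 : ∀ i : Fin n, fderiv ℝ (fun y => fderiv ℝ χ y (EuclideanSpace.single i 1)) x = 0 := by
    intro i
    have : (fun y => fderiv ℝ χ y (EuclideanSpace.single i 1)) =ᶠ[𝓝 x] fun _ => 0 := by
      filter_upwards [h1] with y hy
      simp [hy]
    rw [this.fderiv_eq]; simp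
  unfold aa
  simp [h2, h1.self_of_nhds, h0.self_of_nhds]

theorem aa_cont {χ : En n → ℝ} (hχ : ContDiff ℝ (⊤ : ℕ∞) χ) : Continuous (aa χ) := by
  unfold aa
  refine ((hχ.continuous.abs).add (hχ.continuous_fderiv (by simp)).norm).add (continuous_finsetSum _ fun i _ => ?_)
  exact ((pd_smooth hχ _).continuous_fderiv (by simp)).norm

theorem aa_bdd {χ : En n → ℝ} (hχ : ContDiff ℝ (⊤ : ℕ∞) χ) (hc : HasCompactSupport χ) :
    ∃ M : ℝ≥0, ∀ x, 4 * aa χ x ≤ M := by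
  have hcs : HasCompactSupport (aa χ) :=
    HasCompactSupport.intro hc.isCompact fun x hx => aa_zero hx
  obtain ⟨C, hC⟩ := (aa_cont hχ).bounded_above_of_compact_support hcs
  refine ⟨(4 * C).toNNReal, fun x => ?_⟩
  have := hC x
  have h2 := Real.le_coe_toNNReal (4 * C)
  rw [Real.norm_eq_abs] at this
  linarith [le_abs_self (aa χ x)]
end


section
variable {n : ℕ}

theorem Mo_cauchy {k : En n → ℝ} {p : ℝ} (hp : 1 ≤ p) (hkp : MemLp k (ENNReal.ofReal p) volume)
    (φ : ℕ → ContDiffBump (0 : En n)) (hφ : Tendsto (fun a => (φ a).rOut) atTop (𝓝 0)) :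
    Tendsto (fun a : ℕ × ℕ => eLpNorm (fun x => |Mo (φ a.1) k x - Mo (φ a.2) k x|) (ENNReal.ofReal p) volume)
      (atTop ×ˢ atTop) (𝓝 0) := by
  have hP : (1 : ℝ≥0∞) ≤ ENNReal.ofReal p := by rwa [ENNReal.one_le_ofReal]
  have h := Mo_tendsto' hp hkp φ hφ
  have h2 := (h.comp (tendsto_fst (f := atTop) (g := (atTop : Filter ℕ)))).add
    (h.comp (tendsto_snd (f := (atTop : Filter ℕ)) (g := atTop)))
  rw [add_zero] at h2
  have hm : ∀ a, AEStronglyMeasurable (fun x => Mo (φ a) k x - k x) volume := fun a =>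
    (Mo_contDiff (φ a) (hkp.locallyIntegrable hP)).continuous.aestronglyMeasurable.sub hkp.1
  refine tendsto_of_tendsto_of_tendsto_of_le_of_le tendsto_const_nhds h2 (fun _ => zero_le) fun a => ?_
  have he : (fun x => Mo (φ a.1) k x - Mo (φ a.2) k x) =
      (fun x => Mo (φ a.1) k x - k x) - (fun x => Mo (φ a.2) k x - k x) := by
    ext x; simp
  have := eLpNorm_sub_le (hm a.1) (hm a.2) hP
  rw [← he] at this
  refine le_trans (le_of_eq ?_) this
  exact eLpNorm_norm (fun x => Mo (φ a.1) k x - Mo (φ a.2) k x)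

theorem approx_cauchy {p : ℝ} (hp : 1 ≤ p) {Ω : Set (En n)} (hΩ : IsOpen Ω) {f : En n → ℝ} {g : Fin n → En n → ℝ}
    {m : Fin n → Fin n → En n → ℝ}
    (hfg : ∀ i, HasWeakPartialOn Ω f (g i) (EuclideanSpace.single i 1))
    (hgm : ∀ i k, HasWeakPartialOn Ω (g i) (m i k) (EuclideanSpace.single k 1))
    (hf : ∀ S, S ⊆ Ω → IsCompact S → MemLp (S.indicator f) (ENNReal.ofReal p) volume)
    (hg : ∀ i, ∀ S, S ⊆ Ω → IsCompact S → MemLp (S.indicator (g i)) (ENNReal.ofReal p) volume)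
    (hm : ∀ i k, ∀ S, S ⊆ Ω → IsCompact S → MemLp (S.indicator (m i k)) (ENNReal.ofReal p) volume)
    {K : Set (En n)} (hK : IsCompact K) (hKΩ : K ⊆ Ω) :
    ∃ u : ℕ → En n → ℝ, (∀ a, ContDiff ℝ (⊤ : ℕ∞) (u a)) ∧ (∀ a, HasCompactSupport (u a)) ∧
      (∀ ε : ℝ≥0∞, ε ≠ 0 → ∀ᶠ a : ℕ × ℕ in atTop ×ˢ atTop, 
        (∫⁻ x, ‖fderiv ℝ (fun y => u a.1 y - u a.2 y) x‖ₑ ^ p) ≤ ε ∧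
        ∀ i, (∫⁻ x, ‖fderiv ℝ (fun z => fderiv ℝ (fun y => u a.1 y - u a.2 y) z (EuclideanSpace.single i 1)) x‖ₑ ^ p) ≤ ε) ∧
      ∃ r : ℝ, 0 < r ∧ cthickening r K ⊆ Ω ∧ 
        Tendsto (fun a => ∫⁻ x in cthickening r K, ‖u a x - f x‖ₑ) atTop (𝓝 0) := by
  have hp0 : 0 < p := by linarith
  have hP : (1 : ℝ≥0∞) ≤ ENNReal.ofReal p := by rwa [ENNReal.one_le_ofReal]
  obtain ⟨δ₀, hδ₀, hδ₀Ω⟩ := hK.exists_cthickening_subset_open hΩ hKΩ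
  obtain ⟨δ, hδe⟩ : ∃ δ, δ = δ₀ / 4 := ⟨_, rfl⟩
  have hδ : 0 < δ := by rw [hδe]; positivity
  obtain ⟨S, hS⟩ : ∃ S, S = cthickening (4 * δ) K := ⟨_, rfl⟩
  have hSΩ : S ⊆ Ω := by rw [hS, hδe]; convert hδ₀Ω using 2; ring
  have hSc : IsCompact S := hS ▸ hK.cthickening
  obtain ⟨χ, hχ, hχc, hχs, hχ1⟩ := cutoff (hK.cthickening (r := δ)) hδ
  have hV : ∀ x ∈ tsupport χ, x ∈ thickening (3 * δ) K := by
    intro x hx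
    have h1 := cthickening_cthickening_subset hδ.le hδ.le K (hχs hx)
    exact cthickening_subset_thickening' (by linarith) (by linarith) K h1
  choose φ hφ using fun a : ℕ => bump_exists (E := En n) (r := δ / (a + 1)) (by positivity)
  have hφ0 : Tendsto (fun a => (φ a).rOut) atTop (𝓝 0) := by
    simp only [hφ]
    exact tendsto_const_div_atTop_nhds_zero_nat δ |>.comp (tendsto_add_atTop_nat 1) |>.congr (by intro a; simp)
  have hφδ : ∀ a, (φ a).rOut ≤ δ := by
    intro a; rw [hφ]
    exact div_le_self hδ.le (by simp)
  have hball : ∀ x ∈ thickening (3 * δ) K, ∀ a, closedBall x (φ a).rOut ⊆ S := by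
    intro x hx a y hy
    rw [mem_closedBall] at hy
    obtain ⟨z, hz, hxz⟩ := mem_thickening_iff.1 hx
    rw [hS]
    refine mem_cthickening_of_dist_le y z _ _ hz ?_
    have := dist_triangle y x z
    linarith [hφδ a]
  have lf : LocallyIntegrable (S.indicator f) := (hf S hSΩ hSc).locallyIntegrable hP
  have lg : ∀ i, LocallyIntegrable (S.indicator (g i)) := fun i => (hg i S hSΩ hSc).locallyIntegrable hP
  have lm : ∀ i k, LocallyIntegrable (S.indicator (m i k)) := fun i k => (hm i k S hSΩ hSc).locallyIntegrable hP
  have d1 : ∀ a i, ∀ x ∈ thickening (3 * δ) K,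
      fderiv ℝ (Mo (φ a) (S.indicator f)) x (EuclideanSpace.single i 1) = Mo (φ a) (S.indicator (g i)) x :=
    fun a i x hx => Mo_fderiv (φ a) hSΩ (hfg i) lf (hball x hx a)
  have d2 : ∀ a i k, ∀ x ∈ thickening (3 * δ) K,
      fderiv ℝ (Mo (φ a) (S.indicator (g i))) x (EuclideanSpace.single k 1) = Mo (φ a) (S.indicator (m i k)) x :=
    fun a i k x hx => Mo_fderiv (φ a) hSΩ (hgm i k) (lg i) (hball x hx a)
  have smF : ∀ a, ContDiff ℝ (⊤ : ℕ∞) (Mo (φ a) (S.indicator f)) := fun a => Mo_contDiff (φ a) lf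
  have smP : ∀ a i, ContDiff ℝ (⊤ : ℕ∞) (Mo (φ a) (S.indicator (g i))) := fun a i => Mo_contDiff (φ a) (lg i)
  have smR : ∀ a i k, ContDiff ℝ (⊤ : ℕ∞) (Mo (φ a) (S.indicator (m i k))) := fun a i k => Mo_contDiff (φ a) (lm i k)
  obtain ⟨τ, hτ⟩ : ∃ τ : ℕ × ℕ → En n → ℝ, τ = fun a => (fun x => |Mo (φ a.1) (S.indicator f) x - Mo (φ a.2) (S.indicator f) x|)
      + ∑ i, (fun x => |Mo (φ a.1) (S.indicator (g i)) x - Mo (φ a.2) (S.indicator (g i)) x|)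
      + ∑ i, ∑ k, (fun x => |Mo (φ a.1) (S.indicator (m i k)) x - Mo (φ a.2) (S.indicator (m i k)) x|) := ⟨_, rfl⟩
  have hTτ : ∀ a : ℕ × ℕ, ∀ x ∈ thickening (3 * δ) K,
      TT (fun y => Mo (φ a.1) (S.indicator f) y - Mo (φ a.2) (S.indicator f) y) x = τ a x := by
    intro a x hx
    have q1 : ∀ z ∈ thickening (3 * δ) K, ∀ i,
        fderiv ℝ (fun y => Mo (φ a.1) (S.indicator f) y - Mo (φ a.2) (S.indicator f) y) z (EuclideanSpace.single i 1) =
        Mo (φ a.1) (S.indicator (g i)) z - Mo (φ a.2) (S.indicator (g i)) z := by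
      intro z hz i
      rw [fderiv_fun_sub ((smF _).differentiable (by simp) z) ((smF _).differentiable (by simp) z),
        sub_apply, d1 _ _ z hz, d1 _ _ z hz]
    have q2 : ∀ i k, fderiv ℝ (fun z => fderiv ℝ (fun y => Mo (φ a.1) (S.indicator f) y - Mo (φ a.2) (S.indicator f) y) z
        (EuclideanSpace.single i 1)) x (EuclideanSpace.single k 1) = 
        Mo (φ a.1) (S.indicator (m i k)) x - Mo (φ a.2) (S.indicator (m i k)) x := by
      intro i k
      have : (fun z => fderiv ℝ (fun y => Mo (φ a.1) (S.indicator f) y - Mo (φ a.2) (S.indicator f) y) z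
        (EuclideanSpace.single i 1)) =ᶠ[𝓝 x] fun z => Mo (φ a.1) (S.indicator (g i)) z - Mo (φ a.2) (S.indicator (g i)) z := by
        filter_upwards [isOpen_thickening.mem_nhds hx] with z hz
        exact q1 z hz i
      rw [this.fderiv_eq, fderiv_fun_sub ((smP _ _).differentiable (by simp) x) ((smP _ _).differentiable (by simp) x),
        sub_apply, d2 _ _ _ x hx, d2 _ _ _ x hx]
    unfold TT
    rw [hτ]
    simp only [q2, q1 x hx, Pi.add_apply, Finset.sum_apply]
  have hτm : Tendsto (fun a => eLpNorm (τ a) (ENNReal.ofReal p) volume) (atTop ×ˢ atTop) (𝓝 0) := by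
    have t0 := Mo_cauchy hp (hf S hSΩ hSc) φ hφ0
    have t1 := tendsto_finsetSum Finset.univ fun i (_ : i ∈ Finset.univ) => Mo_cauchy hp (hg i S hSΩ hSc) φ hφ0
    have t2 := tendsto_finsetSum Finset.univ fun i (_ : i ∈ Finset.univ) =>
      tendsto_finsetSum Finset.univ fun k (_ : k ∈ Finset.univ) => Mo_cauchy hp (hm i k S hSΩ hSc) φ hφ0
    have t3 := (t0.add t1).add t2
    simp only [Finset.sum_const_zero, add_zero] at t3
    refine tendsto_of_tendsto_of_tendsto_of_le_of_le tendsto_const_nhds t3 (fun _ => zero_le) fun a => ?_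
    have m0 : AEStronglyMeasurable (fun x => |Mo (φ a.1) (S.indicator f) x - Mo (φ a.2) (S.indicator f) x|) volume :=
      ((smF _).continuous.sub (smF _).continuous).abs.aestronglyMeasurable
    have m1 : ∀ i, AEStronglyMeasurable (fun x => |Mo (φ a.1) (S.indicator (g i)) x - Mo (φ a.2) (S.indicator (g i)) x|) volume :=
      fun i => ((smP _ i).continuous.sub (smP _ i).continuous).abs.aestronglyMeasurable
    have m2 : ∀ i k, AEStronglyMeasurable (fun x => |Mo (φ a.1) (S.indicator (m i k)) x - Mo (φ a.2) (S.indicator (m i k)) x|) volume :=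
      fun i k => ((smR _ i k).continuous.sub (smR _ i k).continuous).abs.aestronglyMeasurable
    have M1 := Finset.aestronglyMeasurable_sum Finset.univ fun i (_ : i ∈ Finset.univ) => m1 i
    have M2' := fun i => Finset.aestronglyMeasurable_sum Finset.univ fun k (_ : k ∈ Finset.univ) => m2 i k
    have M2 := Finset.aestronglyMeasurable_sum Finset.univ fun i (_ : i ∈ Finset.univ) => M2' i
    rw [hτ]
    refine (eLpNorm_add_le (m0.add M1) M2 hP).trans (add_le_add ((eLpNorm_add_le m0 M1 hP).trans (add_le_add le_rfl ?_)) ?_)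
    · exact eLpNorm_sum_le (fun i _ => m1 i) hP
    · exact (eLpNorm_sum_le (fun i _ => M2' i) hP).trans (Finset.sum_le_sum fun i _ => eLpNorm_sum_le (fun k _ => m2 i k) hP)
  obtain ⟨M, hM⟩ := aa_bdd hχ hχc
  have hTT0 : ∀ (G : En n → ℝ) x, 0 ≤ TT G x := by
    intro G x; unfold TT; positivity
  have haa0 : ∀ x, 0 ≤ aa χ x := by
    intro x; unfold aa; positivity
  have hbd : ∀ a : ℕ × ℕ, ∀ x, 4 * aa χ x * TT (fun y => Mo (φ a.1) (S.indicator f) y - Mo (φ a.2) (S.indicator f) y) x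
      ≤ M * ‖τ a x‖ := by
    intro a x
    by_cases hx : x ∈ tsupport χ
    · rw [hTτ a x (hV x hx)]
      have h0 : 0 ≤ τ a x := by rw [← hTτ a x (hV x hx)]; exact hTT0 _ _
      rw [Real.norm_of_nonneg h0]
      exact mul_le_mul_of_nonneg_right (hM x) h0
    · rw [aa_zero hx]; simp only [mul_zero, zero_mul]; positivity
  have hun : ∀ a : ℕ × ℕ, (fun y => χ y * Mo (φ a.1) (S.indicator f) y - χ y * Mo (φ a.2) (S.indicator f) y) =
    fun y => χ y * (Mo (φ a.1) (S.indicator f) y - Mo (φ a.2) (S.indicator f) y) := by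
    intro a; ext y; ring
  have hlim : Tendsto (fun a => ((M : ℝ≥0∞) * eLpNorm (τ a) (ENNReal.ofReal p) volume) ^ p) (atTop ×ˢ atTop) (𝓝 0) := by
    have h1 := (ENNReal.Tendsto.const_mul (a := (M : ℝ≥0∞)) hτm (Or.inr ENNReal.coe_ne_top)).ennrpow_const p
    simpa [hp0] using h1
  have hfin : ∀ (a : ℕ × ℕ) (w : En n → En n →L[ℝ] ℝ), (∀ x, ‖w x‖ ≤ M * ‖τ a x‖) → 
      (∫⁻ x, ‖w x‖ₑ ^ p) ≤ ((M : ℝ≥0∞) * eLpNorm (τ a) (ENNReal.ofReal p) volume) ^ p := by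
    intro a w hw
    rw [energy_eq volume hp]
    refine ENNReal.rpow_le_rpow ?_ hp0.le
    have := eLpNorm_le_mul_eLpNorm_of_ae_le_mul (p := ENNReal.ofReal p) (μ := volume) (f := w) (g := τ a) (c := (M : ℝ)) (Eventually.of_forall hw)
    simpa using this
  refine ⟨fun a y => χ y * Mo (φ a) (S.indicator f) y, fun a => hχ.mul (smF a), fun a => hχc.mul_right, ?_, δ, hδ,
    (cthickening_mono (by linarith) K).trans (hS ▸ hSΩ), ?_⟩
  · intro ε hε
    filter_upwards [(ENNReal.tendsto_nhds_zero.1 hlim) ε (pos_iff_ne_zero.2 hε)] with a ha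
    have sm : ContDiff ℝ (⊤ : ℕ∞) (fun y => Mo (φ a.1) (S.indicator f) y - Mo (φ a.2) (S.indicator f) y) := (smF _).sub (smF _)
    simp only [hun]
    refine ⟨(hfin a _ fun x => ?_).trans ha, fun i => (hfin a _ fun x => (prod_bound2 hχ sm i x).trans (hbd a x)).trans ha⟩
    refine (prod_bound1 hχ sm x).trans (le_trans ?_ (hbd a x))
    have := mul_nonneg (haa0 x) (hTT0 (fun y => Mo (φ a.1) (S.indicator f) y - Mo (φ a.2) (S.indicator f) y) x)
    nlinarith
  · have t := Mo_tendsto' hp (hf S hSΩ hSc) φ hφ0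
    have hKd : IsCompact (cthickening δ K) := hK.cthickening
    have hfinm : (volume.restrict (cthickening δ K) univ) ^ (1 / (1 : ℝ≥0∞).toReal - 1 / (ENNReal.ofReal p).toReal) ≠ ∞ := by
      rw [Measure.restrict_apply_univ]
      refine ENNReal.rpow_ne_top_of_nonneg ?_ hKd.measure_lt_top.ne
      rw [ENNReal.toReal_ofReal hp0.le]
      simp only [ENNReal.toReal_one, div_one, sub_nonneg]
      exact (div_le_one hp0).2 hp
    have t2 := ENNReal.Tendsto.mul_const t (Or.inr hfinm)
    rw [zero_mul] at t2
    refine tendsto_of_tendsto_of_tendsto_of_le_of_le tendsto_const_nhds t2 (fun _ => zero_le) fun a => ?_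
    have hmm : AEStronglyMeasurable (fun x => Mo (φ a) (S.indicator f) x - S.indicator f x) volume :=
      (smF a).continuous.aestronglyMeasurable.sub (hf S hSΩ hSc).1
    calc (∫⁻ x in cthickening δ K, ‖χ x * Mo (φ a) (S.indicator f) x - f x‖ₑ)
        = ∫⁻ x in cthickening δ K, ‖Mo (φ a) (S.indicator f) x - S.indicator f x‖ₑ := by
          refine setLIntegral_congr_fun hKd.measurableSet fun x hx => ?_
          have hxS : x ∈ S := hS ▸ cthickening_mono (by linarith) K hx
          rw [hχ1 x hx, one_mul, indicator_of_mem hxS]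
      _ = eLpNorm (fun x => Mo (φ a) (S.indicator f) x - S.indicator f x) 1 (volume.restrict (cthickening δ K)) := by
          rw [eLpNorm_one_eq_lintegral_enorm]
      _ ≤ _ := (eLpNorm_le_eLpNorm_mul_rpow_measure_univ hP hmm.restrict).trans
          (mul_le_mul' (eLpNorm_mono_measure _ Measure.restrict_le_self) le_rfl)
end


section
variable {n : ℕ}

/-- function itself or a partial derivative -/
noncomputable def pdo (w : En n → ℝ) : Option (Fin n) → En n → ℝ
  | none => w
  | some i => fun z => fderiv ℝ w z (EuclideanSpace.single i 1)

theorem pdo_smooth {w : En n → ℝ} (hw : ContDiff ℝ (⊤ : ℕ∞) w) (o : Option (Fin n)) : ContDiff ℝ (⊤ : ℕ∞) (pdo w o) := by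
  cases o with
  | none => exact hw
  | some i => exact pd_smooth hw _

theorem pdo_cs {w : En n → ℝ} (hw : HasCompactSupport w) (o : Option (Fin n)) : HasCompactSupport (pdo w o) := by
  cases o with
  | none => exact hw
  | some i => exact hw.fderiv_apply ℝ _

theorem approx_seq {p : ℝ} (hp : 1 ≤ p) {Ω : Set (En n)} (hΩ : IsOpen Ω) {f : En n → ℝ} {g : Fin n → En n → ℝ}
    {m : Fin n → Fin n → En n → ℝ}
    (hfg : ∀ i, HasWeakPartialOn Ω f (g i) (EuclideanSpace.single i 1))
    (hgm : ∀ i k, HasWeakPartialOn Ω (g i) (m i k) (EuclideanSpace.single k 1))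
    (hf : ∀ S, S ⊆ Ω → IsCompact S → MemLp (S.indicator f) (ENNReal.ofReal p) volume)
    (hg : ∀ i, ∀ S, S ⊆ Ω → IsCompact S → MemLp (S.indicator (g i)) (ENNReal.ofReal p) volume)
    (hm : ∀ i k, ∀ S, S ⊆ Ω → IsCompact S → MemLp (S.indicator (m i k)) (ENNReal.ofReal p) volume)
    {K : Set (En n)} (hK : IsCompact K) (hKΩ : K ⊆ Ω) (δ : ℕ → ℝ≥0∞) (hδ : ∀ j, δ j ≠ 0) :
    ∃ u : ℕ → En n → ℝ, (∀ a, ContDiff ℝ (⊤ : ℕ∞) (u a)) ∧ (∀ a, HasCompactSupport (u a)) ∧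
      (∀ j o, (∫⁻ x, ‖fderiv ℝ (pdo (fun y => u (j + 1) y - u j y) o) x‖ₑ ^ p) ≤ δ j) ∧
      ∃ r : ℝ, 0 < r ∧ cthickening r K ⊆ Ω ∧ 
        Tendsto (fun a => ∫⁻ x in cthickening r K, ‖u a x - f x‖ₑ) atTop (𝓝 0) := by
  obtain ⟨u, h1, h2, h3, r, hr, hrΩ, ht⟩ := approx_cauchy hp hΩ hfg hgm hf hg hm hK hKΩ
  have h4 : ∀ j : ℕ, ∀ᶠ k in atTop, ∀ a ≥ k, ∀ b ≥ k, ∀ o, (∫⁻ x, ‖fderiv ℝ (pdo (fun y => u a y - u b y) o) x‖ₑ ^ p) ≤ δ j := by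
    intro j
    have := h3 (δ j) (hδ j)
    rw [prod_atTop_atTop_eq, eventually_atTop] at this
    obtain ⟨N, hN⟩ := this
    filter_upwards [eventually_ge_atTop (max N.1 N.2)] with k hk a ha b hb o
    have := hN (a, b) ⟨(le_max_left _ _).trans (hk.trans ha), (le_max_right _ _).trans (hk.trans hb)⟩
    cases o with
    | none => exact this.1
    | some i => exact this.2 i
  obtain ⟨κ, hκ, hκP⟩ := extraction_forall_of_eventually h4
  refine ⟨fun j => u (κ j), fun j => h1 _, fun j => h2 _, fun j o => ?_, r, hr, hrΩ, ht.comp hκ.tendsto_atTop⟩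
  exact hκP j _ (hκ (Nat.lt_succ_self j)).le _ le_rfl o

theorem pt_bound {w : En n → ℝ} (hw : Continuous w) {x : En n} {A : ℝ} (hA : 0 ≤ A)
    (h : ∀ r > 0, ∫⁻ y in ball x r, ‖w y‖ₑ ≤ ENNReal.ofReal A * volume (ball x r)) : |w x| ≤ A := by
  by_contra hc
  push Not at hc
  obtain ⟨A', h1, h2⟩ := exists_between hc
  have : ∀ᶠ y in 𝓝 x, A' < |w y| := hw.abs.continuousAt.eventually (lt_mem_nhds h2)
  obtain ⟨r, hr, hr2⟩ := Metric.eventually_nhds_iff_ball.1 this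
  have h3 : ENNReal.ofReal A' * volume (ball x r) ≤ ∫⁻ y in ball x r, ‖w y‖ₑ := by
    rw [← setLIntegral_const]
    refine setLIntegral_mono' measurableSet_ball fun y hy => ?_
    rw [Real.enorm_eq_ofReal_abs]
    exact ENNReal.ofReal_le_ofReal (hr2 y hy).le
  have h4 := h3.trans (h r hr)
  rw [ENNReal.mul_le_mul_iff_left (measure_ball_pos _ _ hr).ne' measure_ball_lt_top.ne,
    ENNReal.ofReal_le_ofReal_iff hA] at h4
  linarith

theorem preciseRep_eq {f : En n → ℝ} {x : En n} {r₀ L : ℝ} (hr₀ : 0 < r₀) (hf : IntegrableOn f (ball x r₀))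
    (h : ∀ ε > 0, ∃ ρ₀ > 0, ∀ ρ, 0 < ρ → ρ < ρ₀ →
      ∫⁻ y in ball x ρ, ‖f y - L‖ₑ ≤ ENNReal.ofReal ε * volume (ball x ρ)) : preciseRep f x = L := by
  have ht : Tendsto (fun r => ballAvg f x r) (nhdsWithin 0 (Set.Ioi 0)) (nhds L) := by
    rw [Metric.tendsto_nhds]
    intro ε hε
    obtain ⟨ρ₀, hρ₀, H⟩ := h (ε / 2) (by positivity)
    have hmem : Ioo 0 (min ρ₀ r₀) ∈ nhdsWithin (0 : ℝ) (Ioi 0) := Ioo_mem_nhdsGT (by positivity)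
    filter_upwards [hmem] with ρ hρ
    have hρ1 : ρ < ρ₀ := hρ.2.trans_le (min_le_left _ _)
    have hρ2 : ρ < r₀ := hρ.2.trans_le (min_le_right _ _)
    have hv0 := (measure_ball_pos (volume : Measure (En n)) x hρ.1)
    have hv1 : volume (ball x ρ) < ∞ := measure_ball_lt_top
    have hi : IntegrableOn f (ball x ρ) := hf.mono_set (ball_subset_ball hρ2.le)
    have hvr : 0 < volume.real (ball x ρ) := ENNReal.toReal_pos hv0.ne' hv1.ne
    have e1 : ballAvg f x ρ - L = (volume.real (ball x ρ))⁻¹ * ∫ y in ball x ρ, (f y - L) := by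
      unfold ballAvg
      rw [setAverage_eq, integral_sub hi (integrableOn_const hv1.ne), setIntegral_const, smul_eq_mul, smul_eq_mul]
      field_simp
    have e2 : |∫ y in ball x ρ, (f y - L)| ≤ ε / 2 * volume.real (ball x ρ) := by
      have := enorm_integral_le_lintegral_enorm (μ := volume.restrict (ball x ρ)) (fun y => f y - L)
      have := this.trans (H ρ hρ.1 hρ1)
      rw [Real.enorm_eq_ofReal_abs] at this
      have := ENNReal.toReal_mono (ENNReal.mul_ne_top ENNReal.ofReal_ne_top hv1.ne) this
      rwa [ENNReal.toReal_ofReal (abs_nonneg _), ENNReal.toReal_mul, ENNReal.toReal_ofReal (by positivity)] at this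
    rw [Real.dist_eq, e1, abs_mul, abs_of_pos (inv_pos.2 hvr), inv_mul_lt_iff₀ hvr]
    nlinarith
  have hex : ∃ L : ℝ, Tendsto (fun r => ballAvg f x r) (nhdsWithin 0 (Set.Ioi 0)) (nhds L) := ⟨L, ht⟩
  unfold preciseRep
  rw [dif_pos hex]
  exact tendsto_nhds_unique hex.choose_spec ht
end


section
variable {n : ℕ}

theorem ofReal_add_mul {a b : ℝ} (ha : 0 ≤ a) (hb : 0 ≤ b) (v : ℝ≥0∞) :
    ENNReal.ofReal (a + b) * v = ENNReal.ofReal a * v + ENNReal.ofReal b * v := by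
  rw [ENNReal.ofReal_add ha hb, add_mul]

theorem li_add {w w₁ w₂ : En n → ℝ} (hw₁ : Continuous w₁) (S : Set (En n))
    (h : ∀ y, w y = w₁ y + w₂ y) : ∫⁻ y in S, ‖w y‖ₑ ≤ (∫⁻ y in S, ‖w₁ y‖ₑ) + ∫⁻ y in S, ‖w₂ y‖ₑ := by
  rw [← lintegral_add_left hw₁.measurable.enorm]
  exact lintegral_mono fun y => by rw [h]; exact enorm_add_le _ _

theorem geo_le (J : ℕ) : ∑ j ∈ Finset.range J, (2⁻¹ : ℝ) ^ j ≤ 2 := by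
  have h := Summable.sum_le_tsum (f := fun j : ℕ => (2⁻¹ : ℝ) ^ j) (Finset.range J) (fun _ _ => by positivity)
    (summable_geometric_of_lt_one (by norm_num) (by norm_num))
  rw [tsum_geometric_of_lt_one (by norm_num) (by norm_num)] at h
  norm_num at h
  norm_num
  exact h

theorem goodA {u : ℕ → En n → ℝ} (hu : ∀ a, ContDiff ℝ (⊤ : ℕ∞) (u a)) {B : ℝ} (hB : 0 ≤ B) {T : Fin n → ℝ}
    (hT : ∀ i, 0 ≤ T i) {x : En n}
    (h1 : ∀ j o, ∀ ρ > 0, ∫⁻ y in ball x ρ, ‖pdo (fun y => u (j + 1) y - u j y) o y‖ₑ ≤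
      ENNReal.ofReal (B * 2⁻¹ ^ j) * volume (ball x ρ))
    (h2 : ∀ i, ∀ ρ > 0, ∫⁻ y in ball x ρ, ‖pdo (u 0) (some i) y‖ₑ ≤ ENNReal.ofReal (B * T i) * volume (ball x ρ))
    (J : ℕ) (ρ : ℝ) (hρ : 0 < ρ) :
    ∫⁻ y in ball x ρ, ‖fderiv ℝ (u J) y‖ₑ ≤ ENNReal.ofReal (∑ i, (B * T i + B * 2)) * volume (ball x ρ) := by
  have key : ∀ J i, ∫⁻ y in ball x ρ, ‖pdo (u J) (some i) y‖ₑ ≤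
      ENNReal.ofReal (B * T i + B * ∑ j ∈ Finset.range J, 2⁻¹ ^ j) * volume (ball x ρ) := by
    intro J i
    induction J with
    | zero => simpa using h2 i ρ hρ
    | succ J ih =>
      refine (li_add (w₁ := pdo (u J) (some i)) (w₂ := pdo (fun y => u (J + 1) y - u J y) (some i))
        (pdo_smooth (hu J) _).continuous _ fun y => ?_).trans ?_
      · simp only [pdo]
        rw [fderiv_fun_sub ((hu _).differentiable (by simp) y) ((hu _).differentiable (by simp) y), sub_apply]
        ring
      · rw [Finset.sum_range_succ, mul_add, ← add_assoc, ofReal_add_mul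
          (add_nonneg (mul_nonneg hB (hT i)) (mul_nonneg hB (Finset.sum_nonneg fun _ _ => by positivity))) (by positivity)]
        exact add_le_add ih (h1 J (some i) ρ hρ)
  calc ∫⁻ y in ball x ρ, ‖fderiv ℝ (u J) y‖ₑ ≤ ∫⁻ y in ball x ρ, ∑ i, ‖pdo (u J) (some i) y‖ₑ := by
        refine lintegral_mono fun y => ?_
        have := clm_norm_le_sum (fderiv ℝ (u J) y)
        rw [← ofReal_norm]
        refine (ENNReal.ofReal_le_ofReal this).trans ?_
        rw [ENNReal.ofReal_sum_of_nonneg fun _ _ => abs_nonneg _]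
        refine Finset.sum_le_sum fun i _ => ?_
        rw [Real.enorm_eq_ofReal_abs]
        rfl
    _ = ∑ i, ∫⁻ y in ball x ρ, ‖pdo (u J) (some i) y‖ₑ :=
        lintegral_finsetSum _ fun i _ => (pdo_smooth (hu J) _).continuous.measurable.enorm
    _ ≤ ∑ i, ENNReal.ofReal (B * T i + B * 2) * volume (ball x ρ) := by
        refine Finset.sum_le_sum fun i _ => (key J i).trans (mul_le_mul' (ENNReal.ofReal_le_ofReal ?_) le_rfl)
        have := mul_le_mul_of_nonneg_left (geo_le J) hB
        linarith
    _ = _ := by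
        rw [← Finset.sum_mul, ENNReal.ofReal_sum_of_nonneg fun i _ => ?_]
        have := hT i
        positivity

theorem goodB {u : ℕ → En n → ℝ} (hu : ∀ a, ContDiff ℝ (⊤ : ℕ∞) (u a)) {B : ℝ} (hB : 0 ≤ B) {x : En n}
    (h1 : ∀ j, ∀ ρ > 0, ∫⁻ y in ball x ρ, ‖u (j + 1) y - u j y‖ₑ ≤
      ENNReal.ofReal (B * 2⁻¹ ^ j) * volume (ball x ρ)) {f : En n → ℝ} {K : Set (En n)} {r : ℝ} (hr : 0 < r)
    (hx : x ∈ K) (hf : IntegrableOn f (cthickening r K))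
    (ht : Tendsto (fun a => ∫⁻ x in cthickening r K, ‖u a x - f x‖ₑ) atTop (𝓝 0)) :
    Tendsto (fun j => u j x) atTop (𝓝 (preciseRep f x)) := by
  have hc : ∀ j, Continuous (u j) := fun j => (hu j).continuous
  have hsub : ∀ ρ ≤ r, ball x ρ ⊆ cthickening r K := by
    intro ρ hρ y hy
    exact mem_cthickening_of_dist_le y x r K hx ((mem_ball.1 hy).le.trans hρ)
  have hd : ∀ j, dist (u j x) (u (j + 1) x) ≤ B * 2⁻¹ ^ j := by
    intro j
    rw [dist_comm, Real.dist_eq]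
    exact pt_bound (w := fun y => u (j + 1) y - u j y) ((hc _).sub (hc _)) (by positivity) (h1 j)
  have hcs : CauchySeq fun j => u j x := cauchySeq_of_le_geometric 2⁻¹ B (by norm_num) hd
  obtain ⟨L, hL⟩ := cauchySeq_tendsto_of_complete hcs
  have hLj : ∀ j, |u j x - L| ≤ 2 * B * 2⁻¹ ^ j := by
    intro j
    have := dist_le_of_le_geometric_of_tendsto 2⁻¹ B (by norm_num) hd hL j
    rw [Real.dist_eq] at this
    refine this.trans (le_of_eq ?_)
    norm_num
    ring
  have htail : ∀ j k, ∀ ρ > 0, ∫⁻ y in ball x ρ, ‖u j y - u (j + k) y‖ₑ ≤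
      ENNReal.ofReal (B * 2⁻¹ ^ j * ∑ l ∈ Finset.range k, 2⁻¹ ^ l) * volume (ball x ρ) := by
    intro j k ρ hρ
    induction k with
    | zero => simp
    | succ k ih =>
      refine (li_add (w₁ := fun y => u j y - u (j + k) y) (w₂ := fun y => - (u (j + k + 1) y - u (j + k) y))
        ((hc _).sub (hc _)) _ fun y => ?_).trans ?_
      · rw [← add_assoc]; ring
      · rw [Finset.sum_range_succ, mul_add, ofReal_add_mul (mul_nonneg (by positivity) (Finset.sum_nonneg fun _ _ => by positivity))
          (by positivity)]
        refine add_le_add ih ?_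
        simp only [enorm_neg]
        have := h1 (j + k) ρ hρ
        rwa [pow_add, ← mul_assoc] at this
  have htail2 : ∀ j, ∀ ρ > 0, ρ ≤ r → ∫⁻ y in ball x ρ, ‖u j y - f y‖ₑ ≤
      ENNReal.ofReal (2 * B * 2⁻¹ ^ j) * volume (ball x ρ) := by
    intro j ρ hρ hρr
    have h3 : Tendsto (fun k => ENNReal.ofReal (2 * B * 2⁻¹ ^ j) * volume (ball x ρ) +
        ∫⁻ x in cthickening r K, ‖u (j + k) x - f x‖ₑ) atTop (𝓝 (ENNReal.ofReal (2 * B * 2⁻¹ ^ j) * volume (ball x ρ) + 0)) := by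
      refine tendsto_const_nhds.add ?_
      have := ht.comp (tendsto_add_atTop_nat j)
      refine this.congr fun k => ?_
      simp [add_comm]
    rw [add_zero] at h3
    refine ge_of_tendsto' h3 fun k => ?_
    refine (li_add (w₁ := fun y => u j y - u (j + k) y) (w₂ := fun y => u (j + k) y - f y)
        ((hc _).sub (hc _)) _ fun y => ?_).trans (add_le_add ((htail j k ρ hρ).trans ?_) (lintegral_mono_set (hsub ρ hρr)))
    · ring
    · refine mul_le_mul' (ENNReal.ofReal_le_ofReal ?_) le_rfl
      have := mul_le_mul_of_nonneg_left (geo_le k) (show 0 ≤ B * 2⁻¹ ^ j by positivity)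
      linarith
  have hpr : preciseRep f x = L := by
    refine preciseRep_eq hr (hf.mono_set (hsub r le_rfl)) fun ε hε => ?_
    obtain ⟨j, hj⟩ : ∃ j : ℕ, 4 * B * 2⁻¹ ^ j ≤ ε / 2 := by
      have : Tendsto (fun j : ℕ => 4 * B * (2⁻¹ : ℝ) ^ j) atTop (𝓝 (4 * B * 0)) :=
        (tendsto_pow_atTop_nhds_zero_of_lt_one (by norm_num) (by norm_num)).const_mul _
      rw [mul_zero] at this
      exact ((this.eventually (gt_mem_nhds (half_pos hε))).exists).imp fun _ h => h.le
    obtain ⟨ρ₁, hρ₁, hρ⟩ := Metric.continuous_iff.1 (hc j) x (ε / 2) (half_pos hε)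
    refine ⟨min ρ₁ r, by positivity, fun ρ hρ0 hρ2 => ?_⟩
    have hρ3 : ρ < ρ₁ := hρ2.trans_le (min_le_left _ _)
    have hρ4 : ρ ≤ r := (hρ2.trans_le (min_le_right _ _)).le
    calc ∫⁻ y in ball x ρ, ‖f y - L‖ₑ ≤ (∫⁻ y in ball x ρ, ‖u j y - L‖ₑ) + ∫⁻ y in ball x ρ, ‖-(u j y - f y)‖ₑ :=
          li_add (w := fun y => f y - L) (w₁ := fun y => u j y - L) (w₂ := fun y => -(u j y - f y))
            ((hc j).sub continuous_const) _ fun y => by ring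
      _ ≤ ENNReal.ofReal (ε / 2 + 2 * B * 2⁻¹ ^ j) * volume (ball x ρ) + ENNReal.ofReal (2 * B * 2⁻¹ ^ j) * volume (ball x ρ) := by
          refine add_le_add ?_ (by simpa only [enorm_neg] using htail2 j ρ hρ0 hρ4)
          rw [← setLIntegral_const]
          refine setLIntegral_mono' measurableSet_ball fun y hy => ?_
          rw [Real.enorm_eq_ofReal_abs]
          refine ENNReal.ofReal_le_ofReal ?_
          have a1 := hρ y ((mem_ball.1 hy).trans hρ3)
          rw [Real.dist_eq] at a1
          have a2 := abs_add_le (u j y - u j x) (u j x - L)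
          rw [sub_add_sub_cancel] at a2
          linarith [hLj j]
      _ = ENNReal.ofReal (ε / 2 + 2 * B * 2⁻¹ ^ j + 2 * B * 2⁻¹ ^ j) * volume (ball x ρ) := by
          rw [ofReal_add_mul (a := ε / 2 + 2 * B * 2⁻¹ ^ j) (by positivity) (by positivity)]
      _ ≤ _ := mul_le_mul' (ENNReal.ofReal_le_ofReal (by linarith)) le_rfl
  rw [hpr]
  exact hL

theorem local_lip (hn : 1 ≤ n) {p : ℝ} (hp : 1 ≤ p) {Ω : Set (En n)} (hΩ : IsOpen Ω) {f : En n → ℝ} {g : Fin n → En n → ℝ}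
    {m : Fin n → Fin n → En n → ℝ}
    (hfg : ∀ i, HasWeakPartialOn Ω f (g i) (EuclideanSpace.single i 1))
    (hgm : ∀ i k, HasWeakPartialOn Ω (g i) (m i k) (EuclideanSpace.single k 1))
    (hf : ∀ S, S ⊆ Ω → IsCompact S → MemLp (S.indicator f) (ENNReal.ofReal p) volume)
    (hg : ∀ i, ∀ S, S ⊆ Ω → IsCompact S → MemLp (S.indicator (g i)) (ENNReal.ofReal p) volume)
    (hm : ∀ i k, ∀ S, S ⊆ Ω → IsCompact S → MemLp (S.indicator (m i k)) (ENNReal.ofReal p) volume)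
    {K : Set (En n)} (hK : IsCompact K) (hKΩ : K ⊆ Ω) {ε : ℝ≥0∞} (hε : ε ≠ 0) :
    ∃ U, IsOpen U ∧ capOpen p U ≤ ε ∧ ∃ L : ℝ≥0, LipschitzOnWith L (preciseRep f) (K \ U) := by
  have hp0 : 0 < p := by linarith
  have hP : (1 : ℝ≥0∞) ≤ ENNReal.ofReal p := by rwa [ENNReal.one_le_ofReal]
  obtain ⟨C, hC, B, hB, hW⟩ := weakType hn hp
  have h2p : (2 : ℝ≥0∞) ^ p ≠ ∞ := ENNReal.rpow_ne_top_of_nonneg hp0.le (by simp)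
  obtain ⟨ε', hε'0, hε's⟩ := ENNReal.exists_pos_sum_of_countable' (ε := ε / 2 ^ p)
    (ENNReal.div_pos hε h2p).ne' ((ℕ × Option (Fin n)) ⊕ Fin n)
  choose o₀ ho₀ using fun j : ℕ => Finite.exists_min fun o : Option (Fin n) => ε' (.inl (j, o))
  obtain ⟨tj, htj⟩ : ∃ tj : ℕ → ℝ, tj = fun j => 2⁻¹ ^ j := ⟨_, rfl⟩
  have htj0 : ∀ j, 0 < tj j := by intro j; rw [htj]; positivity
  have hδ0 : ∀ j, ε' (.inl (j, o₀ j)) / (C * ENNReal.ofReal (tj j)⁻¹ ^ p) ≠ 0 := fun j =>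
    (ENNReal.div_pos (hε'0 _).ne' (ENNReal.mul_ne_top hC (ENNReal.rpow_ne_top_of_nonneg hp0.le ENNReal.ofReal_ne_top))).ne'
  obtain ⟨u, hu, huc, hen, r, hr, hrΩ, ht⟩ := approx_seq hp hΩ hfg hgm hf hg hm hK hKΩ _ hδ0
  have hTex : ∀ i, ∃ T : ℝ, 0 < T ∧ C * (ENNReal.ofReal T⁻¹ ^ p * ∫⁻ x, ‖fderiv ℝ (pdo (u 0) (some i)) x‖ₑ ^ p) ≤ ε' (.inr i) := by
    intro i
    have hfin : (∫⁻ x, ‖fderiv ℝ (pdo (u 0) (some i)) x‖ₑ ^ p) ≠ ∞ := by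
      rw [energy_eq volume hp]
      refine ENNReal.rpow_ne_top_of_nonneg hp0.le ?_
      have hcont := (pdo_smooth (hu 0) (some i)).continuous_fderiv (by simp)
      exact (hcont.memLp_of_hasCompactSupport ((pdo_cs (huc 0) (some i)).fderiv ℝ)).2.ne
    obtain ⟨s, hs0, hs⟩ := ENNReal.exists_nnreal_pos_mul_lt (ENNReal.mul_ne_top hC hfin) (hε'0 (.inr i)).ne'
    have hs1 : 0 < min s 1 := lt_min hs0 one_pos
    refine ⟨((min s 1 : ℝ≥0) : ℝ)⁻¹, by positivity, ?_⟩
    rw [inv_inv, ENNReal.ofReal_coe_nnreal]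
    have e1 : ((min s 1 : ℝ≥0) : ℝ≥0∞) ^ p ≤ s := by
      calc ((min s 1 : ℝ≥0) : ℝ≥0∞) ^ p ≤ ((min s 1 : ℝ≥0) : ℝ≥0∞) ^ (1 : ℝ) :=
            ENNReal.rpow_le_rpow_of_exponent_ge (by exact_mod_cast min_le_right s 1) hp
        _ ≤ s := by rw [ENNReal.rpow_one]; exact_mod_cast min_le_left s 1
    refine le_trans ?_ hs.le
    rw [mul_left_comm]
    exact mul_le_mul' e1 le_rfl
  choose T hT0 hT using hTex
  have hU1 : ∀ q : ℕ × Option (Fin n), ∃ U, IsOpen U ∧ capOpen p U ≤ ε' (.inl q) ∧ ∀ x ∉ U, ∀ ρ > 0,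
      ∫⁻ y in ball x ρ, ‖pdo (fun y => u (q.1 + 1) y - u q.1 y) q.2 y‖ₑ ≤ ENNReal.ofReal (B * tj q.1) * volume (ball x ρ) := by
    rintro ⟨j, o⟩
    have sm : ContDiff ℝ (⊤ : ℕ∞) (fun y => u (j + 1) y - u j y) := (hu _).sub (hu _)
    have cs : HasCompactSupport (fun y => u (j + 1) y - u j y) := (huc _).sub (huc _)
    obtain ⟨U, hUo, hUc, hUx⟩ := hW _ ((pdo_smooth sm o).of_le (by simp)) (pdo_cs cs o) (tj j) (htj0 j)
    refine ⟨U, hUo, hUc.trans ?_, hUx⟩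
    rw [← mul_assoc]
    refine (mul_le_mul' le_rfl (hen j o)).trans (ENNReal.mul_div_le.trans (ho₀ j o))
  have hU2 : ∀ i, ∃ U, IsOpen U ∧ capOpen p U ≤ ε' (.inr i) ∧ ∀ x ∉ U, ∀ ρ > 0,
      ∫⁻ y in ball x ρ, ‖pdo (u 0) (some i) y‖ₑ ≤ ENNReal.ofReal (B * T i) * volume (ball x ρ) := by
    intro i
    obtain ⟨U, hUo, hUc, hUx⟩ := hW _ ((pdo_smooth (hu 0) (some i)).of_le (by simp)) (pdo_cs (huc 0) (some i)) (T i) (hT0 i)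
    exact ⟨U, hUo, hUc.trans (hT i), hUx⟩
  choose U1 hU1o hU1c hU1x using hU1
  choose U2 hU2o hU2c hU2x using hU2
  obtain ⟨U, hU⟩ : ∃ U : (ℕ × Option (Fin n)) ⊕ Fin n → Set (En n), U = Sum.elim U1 U2 := ⟨_, rfl⟩
  have hUo : ∀ q, IsOpen (U q) := by
    rw [hU]; rintro (q | i)
    · exact hU1o q
    · exact hU2o i
  have hUc : ∀ q, capOpen p (U q) ≤ ε' q := by
    rw [hU]; rintro (q | i)
    · exact hU1c q
    · exact hU2c i
  have hfint : IntegrableOn f (cthickening r K) := by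
    have h1 := (hf _ hrΩ hK.cthickening).locallyIntegrable hP
    have h2 := h1.integrableOn_isCompact (hK.cthickening (r := r))
    refine h2.congr_fun (fun x hx => ?_) hK.cthickening.measurableSet
    rw [indicator_of_mem hx]
  refine ⟨⋃ q, U q, isOpen_iUnion hUo, ?_, ?_⟩
  · refine (capOpen_iUnion hp U hUo).trans ?_
    refine (mul_le_mul' le_rfl ((ENNReal.tsum_le_tsum hUc).trans hε's.le)).trans ENNReal.mul_div_le
  · have hn1 : ∀ x ∉ ⋃ q, U q, ∀ j o, ∀ ρ > 0, ∫⁻ y in ball x ρ, ‖pdo (fun y => u (j + 1) y - u j y) o y‖ₑ ≤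
        ENNReal.ofReal (B * 2⁻¹ ^ j) * volume (ball x ρ) := by
      intro x hx j o ρ hρ
      have := hU1x (j, o) x (fun hh => hx (mem_iUnion.2 ⟨.inl (j, o), by rw [hU]; exact hh⟩)) ρ hρ
      rwa [htj] at this
    have hn2 : ∀ x ∉ ⋃ q, U q, ∀ i, ∀ ρ > 0, ∫⁻ y in ball x ρ, ‖pdo (u 0) (some i) y‖ₑ ≤
        ENNReal.ofReal (B * T i) * volume (ball x ρ) := by
      intro x hx i
      exact hU2x i x (fun hh => hx (mem_iUnion.2 ⟨.inr i, by rw [hU]; exact hh⟩))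
    obtain ⟨A, hA⟩ : ∃ A, A = ∑ i, (B * T i + B * 2) := ⟨_, rfl⟩
    have hA0 : 0 ≤ A := by
      rw [hA]
      refine Finset.sum_nonneg fun i _ => ?_
      have := (hT0 i).le
      positivity
    refine ⟨(2 ^ (Module.finrank ℝ (En n) + 1) * A).toNNReal, LipschitzOnWith.of_dist_le_mul fun x hx y hy => ?_⟩
    rw [Real.coe_toNNReal _ (by positivity)]
    have tx := goodB hu hB (fun j => hn1 x hx.2 j none) hr hx.1 hfint ht
    have ty := goodB hu hB (fun j => hn1 y hy.2 j none) hr hy.1 hfint ht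
    refine le_of_tendsto' (tx.dist ty) fun J => ?_
    rw [Real.dist_eq]
    refine lip_of_max volume x y (u J) ((hu J).of_le (by simp)) hA0 ?_ ?_
    · intro s hs
      rw [hA]; exact goodA hu hB (fun i => (hT0 i).le) (hn1 x hx.2) (hn2 x hx.2) J s hs
    · intro s hs
      rw [hA]; exact goodA hu hB (fun i => (hT0 i).le) (hn1 y hy.2) (hn2 y hy.2) J s hs
end


section
variable {n : ℕ}

theorem memLp_ind {p : ℝ} (hp : 1 ≤ p) {K : Set (En n)} (hK : IsCompact K) {k H : En n → ℝ}
    (hk : AEStronglyMeasurable k (volume.restrict K)) (hkH : ∀ x, |k x| ≤ H x)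
    (hi : IntegrableOn (fun x => H x ^ p) K) : MemLp (K.indicator k) (ENNReal.ofReal p) volume := by
  have hp0 : 0 < p := by linarith
  rw [memLp_indicator_iff_restrict hK.measurableSet]
  refine ⟨hk, ?_⟩
  have h1 : (∫⁻ x in K, ‖k x‖ₑ ^ p) < ∞ := by
    refine lt_of_le_of_lt (lintegral_mono fun x => ?_) hi.2
    have hH : 0 ≤ H x := (abs_nonneg _).trans (hkH x)
    rw [Real.enorm_eq_ofReal_abs, Real.enorm_eq_ofReal_abs, abs_of_nonneg (Real.rpow_nonneg hH p),
      ENNReal.ofReal_rpow_of_nonneg (abs_nonneg _) hp0.le]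
    exact ENNReal.ofReal_le_ofReal (Real.rpow_le_rpow (abs_nonneg _) (hkH x) hp0.le)
  rw [energy_eq _ hp] at h1
  by_contra hc
  rw [not_lt, top_le_iff] at hc
  rw [hc, ENNReal.top_rpow_of_pos hp0] at h1
  exact lt_irrefl _ h1

theorem cap_empty {p : ℝ} (hp : 1 ≤ p) : cap p (∅ : Set (En n)) = 0 := by
  have hp0 : 0 < p := by linarith
  refine le_antisymm ?_ zero_le
  unfold cap
  refine iInf₂_le_of_le ∅ ⟨le_rfl, isOpen_empty⟩ ?_
  unfold capOpen
  refine iSup₂_le fun F hF => ?_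
  unfold capK
  refine iInf₂_le_of_le (fun _ => 0) ⟨contDiff_const, HasCompactSupport.zero, fun x hx => (hF.1 hx).elim⟩ ?_
  simp [hp0]

theorem exhaust {Ω : Set (En n)} (hΩ : IsOpen Ω) : ∃ K : ℕ → Set (En n), (∀ k, IsCompact (K k)) ∧ (∀ k, K k ⊆ Ω) ∧
    Monotone K ∧ ⋃ k, K k = Ω := by
  obtain ⟨F, h1, h2, h3, h4⟩ := hΩ.exists_iUnion_isClosed
  have hb : Monotone fun k : ℕ => closedBall (0 : En n) k := fun a b hab => closedBall_subset_closedBall (by exact_mod_cast hab)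
  refine ⟨fun k => F k ∩ closedBall 0 k, fun k => (isCompact_closedBall _ _).inter_left (h1 k),
    fun k => inter_subset_left.trans (h2 k), fun a b hab => inter_subset_inter (h4 hab) (hb hab), ?_⟩
  rw [iUnion_inter_of_monotone h4 hb, h3, iUnion_closedBall_nat, inter_univ]

theorem main_pos (hn : 1 ≤ n) (Ω : Set (En n)) (hΩ : IsOpen Ω)
    (p : ℝ) (hp : 1 ≤ p)
    (f : En n → ℝ) (g : En n → En n) (h : En n → Fin n → En n)
    (hf : MemW2pLoc p Ω f g h) :
    ∃ C : ℕ → Set (En n),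
      (∀ k, IsClosed (C k)) ∧ (∀ k, C k ⊆ C (k + 1)) ∧ (∀ k, C k ⊆ Ω) ∧
      (∀ k, LipschitzOnQE p (preciseRep f) (C k)) ∧
      cap p (Ω \ ⋃ k, C k) = 0 := by
  have hp0 : 0 < p := by linarith
  have hP : (1 : ℝ≥0∞) ≤ ENNReal.ofReal p := by rwa [ENNReal.one_le_ofReal]
  obtain ⟨hfm, hgm, hfg, hgh, hint⟩ := hf
  have hgmi : ∀ i, AEStronglyMeasurable (fun x => g x i) volume := fun i =>
    (EuclideanSpace.proj i : En n →L[ℝ] ℝ).continuous.comp_aestronglyMeasurable hgm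
  have Hf : ∀ S, S ⊆ Ω → IsCompact S → MemLp (S.indicator f) (ENNReal.ofReal p) volume := fun S hS hSc =>
    memLp_ind hp hSc hfm.restrict (fun x => le_rfl) (hint S hS hSc).1
  have Hg : ∀ i, ∀ S, S ⊆ Ω → IsCompact S → MemLp (S.indicator fun x => g x i) (ENNReal.ofReal p) volume := fun i S hS hSc =>
    memLp_ind hp hSc (hgmi i).restrict (fun x => PiLp.norm_apply_le (g x) i) (hint S hS hSc).2.1
  have Hgi : ∀ i, ∀ S, S ⊆ Ω → IsCompact S → IntegrableOn (fun x => g x i) S := by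
    intro i S hS hSc
    have h2 := ((Hg i S hS hSc).locallyIntegrable hP).integrableOn_isCompact hSc
    refine h2.congr_fun (fun x hx => ?_) hSc.measurableSet
    rw [indicator_of_mem hx]
  choose m hm1 hm2 hm3 using fun i k => fixh hΩ (Hgi i) (hgh i k)
  have Hm : ∀ i k, ∀ S, S ⊆ Ω → IsCompact S → MemLp (S.indicator (m i k)) (ENNReal.ofReal p) volume := fun i k S hS hSc =>
    memLp_ind hp hSc (hm2 i k S hS hSc) (fun x => (hm3 i k x).trans (PiLp.norm_apply_le (h x i) k)) ((hint S hS hSc).2.2 i)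
  obtain ⟨K, hKc, hKΩ, hKm, hKU⟩ := exhaust hΩ
  obtain ⟨ε, hε0, hεs⟩ := ENNReal.exists_pos_sum_of_countable' (one_ne_zero (α := ℝ≥0∞)) ℕ
  choose U hUo hUc L hL using fun k => local_lip hn hp hΩ hfg hm1 Hf Hg Hm (hKc k) (hKΩ k) (hε0 k).ne'
  have hVo : ∀ k, IsOpen (⋃ j, U (j + k)) := fun k => isOpen_iUnion fun j => hUo _
  have hVm : ∀ k l, k ≤ l → (⋃ j, U (j + l)) ⊆ ⋃ j, U (j + k) := by
    intro k l hkl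
    refine iUnion_subset fun j => ?_
    refine subset_iUnion_of_subset (j + (l - k)) ?_
    rw [add_assoc, Nat.sub_add_cancel hkl]
  refine ⟨fun k => K k \ ⋃ j, U (j + k), fun k => (hKc k).isClosed.sdiff (hVo k),
    fun k => sdiff_subset_sdiff (hKm (Nat.le_succ k)) (hVm k (k + 1) (Nat.le_succ k)),
    fun k => sdiff_subset.trans (hKΩ k), fun k => ⟨∅, empty_subset _, cap_empty hp, L k, ?_⟩, ?_⟩
  · rw [sdiff_empty]
    refine (hL k).mono (sdiff_subset_sdiff_right ?_)
    refine subset_iUnion_of_subset 0 ?_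
    rw [zero_add]
  · refine le_antisymm ?_ zero_le
    have hlim := ENNReal.Tendsto.const_mul (a := (2 : ℝ≥0∞) ^ p)
      (ENNReal.tendsto_sum_nat_add ε (hεs.trans ENNReal.one_lt_top).ne)
      (Or.inr (ENNReal.rpow_ne_top_of_nonneg hp0.le (by simp)))
    rw [mul_zero] at hlim
    refine ge_of_tendsto' hlim fun k => ?_
    refine le_trans ?_ ((capOpen_iUnion hp (fun j => U (j + k)) fun j => hUo _).trans
      (mul_le_mul' le_rfl (ENNReal.tsum_le_tsum fun j => hUc (j + k))))
    unfold cap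
    refine iInf₂_le_of_le (⋃ j, U (j + k)) ⟨?_, hVo k⟩ le_rfl
    rintro x ⟨hxΩ, hx⟩
    rw [← hKU] at hxΩ
    obtain ⟨j, hj⟩ := mem_iUnion.1 hxΩ
    by_contra hc
    refine hx (mem_iUnion.2 ⟨max j k, hKm (le_max_left _ _) hj, fun hh => hc (hVm k _ (le_max_right _ _) hh)⟩)
end

/-- Lipschitz approximation of `W^{2,p}_loc(Ω)` functions up to sets of
`p`-capacity zero. -/
theorem lipschitz_approx_W2p {n : ℕ} (Ω : Set (En n)) (hΩ : IsOpen Ω)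
    (p : ℝ) (hp : 1 ≤ p)
    (f : En n → ℝ) (g : En n → En n) (h : En n → Fin n → En n)
    (hf : MemW2pLoc p Ω f g h) :
    ∃ C : ℕ → Set (En n),
      (∀ k, IsClosed (C k)) ∧ (∀ k, C k ⊆ C (k + 1)) ∧ (∀ k, C k ⊆ Ω) ∧
      (∀ k, LipschitzOnQE p (preciseRep f) (C k)) ∧
      cap p (Ω \ ⋃ k, C k) = 0 := by
  rcases Nat.eq_zero_or_pos n with h0 | hn
  · subst h0
    refine ⟨fun _ => Ω, fun _ => isClosed_discrete _, fun _ => le_rfl, fun _ => le_rfl,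
      fun _ => ⟨∅, empty_subset _, cap_empty hp, 0, fun x _ y _ => ?_⟩, ?_⟩
    · rw [Subsingleton.elim x y]; simp
    · rw [iUnion_const, sdiff_self]; exact cap_empty hp
  · exact main_pos hn Ω hΩ p hp f g h hf
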